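/- There is a constant K > 0 such that almost all posets P on N labelled elements satisfy (log 2)/3 ≤ c_⋆(P) ≤ (log 2)/3 + K/log N; that is, letting Π_N denote the set of all partial orders on the set [N], the proportion |{ ≤ ∈ Π_N : (log 2)/3 ≤ c_⋆(([N], ≤)) ≤ (log 2)/3 + K/log N }| / |Π_N| tends to 1 as N → ∞. -/

import Mathlib

open Classical in
/-- The finset of all antichains (including the empty antichain) of a finite poset `P`. -/
noncomputable def antichains (P : Type*) [Fintype P] [PartialOrder P] : Finset (Finset P) :=
  Finset.univ.filter (fun A => IsAntichain (· ≤ ·) (A : Set P))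

/-- The upper shadow `∂_Q S` of an antichain `S` of `P` inside a subset `Q ⊆ P`. -/
def upperShadow {P : Type*} [PartialOrder P] (Q : Set P) (S : Set P) : Set P :=
  {y | y ∈ Q ∧ (∃ x ∈ S, x ≤ y) ∧ ∀ z ∈ Q, z < y → ∀ x ∈ S, ¬ x ≤ z}

open Classical in
/-- The antichains of the subposet `Q ⊆ P`, i.e. antichains of `P` contained in `Q`. -/
noncomputable def antichainsIn {P : Type*} [Fintype P] [PartialOrder P] (Q : Set P) :
    Finset (Finset P) :=
  (antichains P).filter (fun A => (A : Set P) ⊆ Q)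

/-- A weighting `α ∈ Δ_{a(P)}`: a nonnegative function on the antichains of `P`
(extended by `0` off the antichains) summing to `1`. -/
def IsWeighting {P : Type*} [Fintype P] [PartialOrder P] (α : Finset P → ℝ) : Prop :=
  (∀ A ∈ antichains P, 0 ≤ α A) ∧ (∀ A ∉ antichains P, α A = 0) ∧
    ∑ A ∈ antichains P, α A = 1

open Classical in
/-- The shadow weighting `∂_Q(α)`: the coordinate of `∂_Q(α)` at an antichain `T` of `Q`
is the sum of `α` over all antichains of `P` whose upper shadow in `Q` is `T`. -/
noncomputable def shadowWeight {P : Type*} [Fintype P] [PartialOrder P]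
    (α : Finset P → ℝ) (Q : Set P) (T : Finset P) : ℝ :=
  ∑ A ∈ (antichains P).filter (fun B : Finset P => upperShadow Q (B : Set P) = (T : Set P)), α A

/-- The critical exponent `c_{α,P}(Q) = H_{a(Q)}(∂_Q(α)) / |Q|` of a subposet `Q` of `P`
with respect to a weighting `α` (natural logarithm; `0 log 0 = 0`). -/
noncomputable def critExp {P : Type*} [Fintype P] [PartialOrder P]
    (α : Finset P → ℝ) (Q : Set P) : ℝ :=
  (∑ T ∈ antichainsIn Q, -(shadowWeight α Q T * Real.log (shadowWeight α Q T))) /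
    (Q.ncard : ℝ)

/-- The critical exponent `c_⋆(P) = max_{α ∈ Δ_{a(P)}} min_{∅ ≠ Q ⊆ P} c_{α,P}(Q)`,
expressed as `sup {c ≥ 0 : ∃ α ∈ Δ_{a(P)}, ∀ ∅ ≠ Q ⊆ P, c ≤ c_{α,P}(Q)}`. -/
noncomputable def critStar (P : Type*) [Fintype P] [PartialOrder P] : ℝ :=
  sSup {c : ℝ | 0 ≤ c ∧ ∃ α : Finset P → ℝ, IsWeighting α ∧
    ∀ Q : Set P, Q.Nonempty → c ≤ critExp α Q}

/-- The partial order structure determined by a partial order relation `r`. -/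
def relPO {α : Type*} (r : α → α → Prop) (h : IsPartialOrder α r) : PartialOrder α where
  le := r
  le_refl := h.refl
  le_trans _ _ _ := h.trans _ _ _
  le_antisymm _ _ := h.antisymm _ _

namespace KR
open Finset
open scoped Classical
set_option linter.unusedSectionVars false

/-- Adjacency in the underlying graph of a digraph. -/
def Adj {V : Type} (E : Finset (V × V)) (x y : V) : Prop := (x, y) ∈ E ∨ (y, x) ∈ E

/-- The local properties of Hasse diagrams which are used in the counting argument. -/
structure Cls {V : Type} (E : Finset (V × V)) : Prop where
  asym : ∀ x y, (x, y) ∈ E → (y, x) ∉ E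
  tri : ∀ x y z, Adj E x y → Adj E y z → Adj E x z → False
  four : ∀ w x u y, (w, x) ∈ E → (x, u) ∈ E → Adj E w y → Adj E y u →
    (w, y) ∈ E ∧ (y, u) ∈ E

/-- The neighbourhood of a vertex. -/
noncomputable def nb {V : Type} [Fintype V] (E : Finset (V × V)) (v : V) : Finset V :=
  univ.filter (fun u => Adj E v u)

/-- The union of neighbourhoods of a set. -/
noncomputable def RR {V : Type} [Fintype V] (E : Finset (V × V)) (Q : Finset V) : Finset V :=
  Q.biUnion (nb E)

/-- Delete all edges touching `T`. -/
noncomputable def del {V : Type} (E : Finset (V × V)) (T : Finset V) : Finset (V × V) :=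
  E.filter (fun e => e.1 ∉ T ∧ e.2 ∉ T)

/-- The number of digraphs in the class on `n` vertices. -/
noncomputable def fcount (n : ℕ) : ℕ :=
  (univ.filter (fun E : Finset (Fin n × Fin n) => Cls E)).card

/-- Minimum degree condition. -/
def MinDeg {V : Type} [Fintype V] (E : Finset (V × V)) : Prop :=
  ∀ v, Fintype.card V ≤ 64 * (nb E v).card

section
variable {V : Type} [Fintype V] {E : Finset (V × V)}

theorem mem_nb {v u : V} : u ∈ nb E v ↔ Adj E v u := by simp [nb]

theorem Adj.symm {x y : V} (h : Adj E x y) : Adj E y x := Or.symm h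

theorem adj_comm {x y : V} : Adj E x y ↔ Adj E y x := ⟨Adj.symm, Adj.symm⟩

theorem mem_nb_comm {v u : V} : u ∈ nb E v ↔ v ∈ nb E u := by
  rw [mem_nb, mem_nb, adj_comm]

theorem mem_del {T : Finset V} {x y : V} : (x, y) ∈ del E T ↔ (x, y) ∈ E ∧ x ∉ T ∧ y ∉ T := by
  simp [del]

theorem adj_del {T : Finset V} {x y : V} : Adj (del E T) x y ↔ Adj E x y ∧ x ∉ T ∧ y ∉ T := by
  simp only [Adj, mem_del]; tauto

theorem Cls.mono {F : Finset (V × V)} (h : Cls E) (hF : F ⊆ E) : Cls F := by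
  have ha : ∀ x y, Adj F x y → Adj E x y := fun x y hxy => hxy.imp (fun h => hF h) (fun h => hF h)
  refine ⟨fun x y hx hy => h.asym x y (hF hx) (hF hy),
    fun x y z h1 h2 h3 => h.tri x y z (ha _ _ h1) (ha _ _ h2) (ha _ _ h3), ?_⟩
  intro w x u y h1 h2 h3 h4
  obtain ⟨a, b⟩ := h.four w x u y (hF h1) (hF h2) (ha _ _ h3) (ha _ _ h4)
  refine ⟨h3.resolve_right fun h' => h.asym _ _ a (hF h'),
    h4.resolve_right fun h' => h.asym _ _ b (hF h')⟩

theorem Cls.irrefl (h : Cls E) (x : V) : ¬ Adj E x x := by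
  intro hx
  have : (x, x) ∈ E := by rcases hx with h | h <;> exact h
  exact h.asym _ _ this this

theorem orient (h : Cls E) {w x u y : V} (hx : Adj E w x) (hy : Adj E w y) (hux : Adj E u x)
    (huy : Adj E u y) :
    ((w, x) ∈ E ↔ (w, y) ∈ E) ↔ ((u, x) ∈ E ↔ (u, y) ∈ E) := by
  have e1 : (w, x) ∈ E ↔ (x, w) ∉ E := ⟨h.asym _ _, fun h' => hx.resolve_right h'⟩
  have e2 : (w, y) ∈ E ↔ (y, w) ∉ E := ⟨h.asym _ _, fun h' => hy.resolve_right h'⟩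
  have e3 : (u, x) ∈ E ↔ (x, u) ∉ E := ⟨h.asym _ _, fun h' => hux.resolve_right h'⟩
  have e4 : (u, y) ∈ E ↔ (y, u) ∉ E := ⟨h.asym _ _, fun h' => huy.resolve_right h'⟩
  have f1 := h.four w x u y
  have f2 := h.four w y u x
  have f3 := h.four u x w y
  have f4 := h.four u y w x
  have f5 := h.four x w y u
  have f6 := h.four x u y w
  have f7 := h.four y w x u
  have f8 := h.four y u x w
  simp only [Adj] at *
  by_cases (w, x) ∈ E <;> by_cases (w, y) ∈ E <;> by_cases (u, x) ∈ E <;> by_cases (u, y) ∈ E <;>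
    simp_all

theorem card_image_del (T : Finset V) :
    ((univ.filter (fun E : Finset (V × V) => Cls E)).image (fun E => del E T)).card
      ≤ fcount (Fintype.card V - T.card) := by
  have hc : Fintype.card {x // x ∉ T} = Fintype.card V - T.card := by
    rw [Fintype.card_subtype_compl (fun x => x ∈ T)]; simp
  let e : {x // x ∉ T} ≃ Fin (Fintype.card V - T.card) := Fintype.equivFinOfCardEq hc
  unfold fcount
  let g : Finset (V × V) → Finset (Fin (Fintype.card V - T.card) × Fin (Fintype.card V - T.card)) :=
    fun F => univ.filter (fun p => ((e.symm p.1 : V), (e.symm p.2 : V)) ∈ F)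
  have hg : ∀ F a b, (a, b) ∈ g F ↔ ((e.symm a : V), (e.symm b : V)) ∈ F := by
    intro F a b; simp [g]
  have hga : ∀ F a b, Adj (g F) a b ↔ Adj F (e.symm a : V) (e.symm b : V) := by
    intro F a b; simp [Adj, hg]
  refine Finset.card_le_card_of_injOn g ?_ ?_
  · intro F hF
    simp only [coe_image, Set.mem_image, mem_coe, mem_filter, mem_univ, true_and] at hF
    obtain ⟨E, hE, rfl⟩ := hF
    have hd : Cls (del E T) := hE.mono (filter_subset _ _)
    simp only [coe_filter, mem_univ, true_and, Set.mem_ofPred_eq]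
    refine ⟨?_, ?_, ?_⟩
    · intro x y; rw [hg, hg]; exact hd.asym _ _
    · intro x y z; rw [hga, hga, hga]; exact hd.tri _ _ _
    · intro w x u y; rw [hga, hga, hg, hg, hg, hg]; exact hd.four _ _ _ _
  · intro F hF F' hF' heq
    simp only [coe_image, Set.mem_image, mem_coe, mem_filter, mem_univ, true_and] at hF hF'
    obtain ⟨E, hE, rfl⟩ := hF
    obtain ⟨E', hE', rfl⟩ := hF'
    ext ⟨x, y⟩
    by_cases hx : x ∈ T
    · simp [mem_del, hx]
    by_cases hy : y ∈ T
    · simp [mem_del, hy]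
    have h1 := hg (del E T) (e ⟨x, hx⟩) (e ⟨y, hy⟩)
    have h2 := hg (del E' T) (e ⟨x, hx⟩) (e ⟨y, hy⟩)
    simp only [Equiv.symm_apply_apply] at h1 h2
    rw [← h1, ← h2]
    rw [heq]

theorem master0 {Code : Type} [Fintype Code] (B : Finset (Finset (V × V))) (k M : ℕ)
    (T : Code → Finset V) (rel : Code → Finset (V × V) → Prop)
    (hT : ∀ c E, rel c E → (T c).card = k)
    (h : ∀ E ∈ B, Cls E ∧ ∃ c, rel c E)
    (hM : ∀ c E0, (B.filter (fun E => rel c E ∧ del E (T c) = E0)).card ≤ M) :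
    B.card ≤ Fintype.card Code * (M * fcount (Fintype.card V - k)) := by
  have h1 : B ⊆ (univ : Finset Code).biUnion (fun c => B.filter (fun E => rel c E)) := by
    intro E hE
    obtain ⟨c, hc⟩ := (h E hE).2
    simp only [mem_biUnion, mem_univ, true_and, mem_filter]
    exact ⟨c, hE, hc⟩
  refine (card_le_card h1).trans (card_biUnion_le.trans ?_)
  refine (Finset.sum_le_card_nsmul _ _ (M * fcount (Fintype.card V - k)) ?_).trans (by simp)
  intro c _
  by_cases hne : ∃ E, E ∈ B.filter (fun E => rel c E)
  · obtain ⟨E1, hE1⟩ := hne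
    have hk := hT c E1 (mem_filter.1 hE1).2
    refine (Finset.card_le_mul_card_image (f := fun E => del E (T c)) _ M ?_).trans ?_
    · intro E0 _
      rw [filter_filter]
      exact hM c E0
    · refine Nat.mul_le_mul_left _ ?_
      rw [← hk]
      refine le_trans (card_le_card ?_) (card_image_del (T c))
      refine image_subset_image ?_
      intro E hE
      simp only [mem_filter, mem_univ, true_and]
      exact (h E (mem_filter.1 hE).1).1
  · have : B.filter (fun E => rel c E) = ∅ := by
      rw [eq_empty_iff_forall_notMem]; intro E hE; exact hne ⟨E, hE⟩
    rw [this]; simp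

theorem exists_refs (hd : MinDeg E) (T : Finset V) (hT : 128 * T.card ≤ Fintype.card V)
    (hn : 0 < Fintype.card V) (w : V) :
    ∃ ρ : Fin 128 → V, (∀ j, ρ j ∈ nb E w ∧ ρ j ∉ T) ∧
      ∀ x ∈ nb E w, x ∉ T → ∃ j, ∃ u, u ∉ T ∧ u ∈ nb E x ∧ u ∈ nb E (ρ j) := by
  have hbig : ∀ x, Fintype.card V ≤ 128 * (nb E x \ T).card := by
    intro x
    have h1 := hd x
    have h2 := le_card_sdiff T (nb E x)
    omega
  let F : Finset (Finset V) := ((nb E w \ T).powerset).filter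
    (fun S => (S : Set V).PairwiseDisjoint (fun x => nb E x \ T))
  obtain ⟨S, hS, hmax⟩ := exists_max_image F card ⟨∅, by simp [F]⟩
  simp only [F, mem_filter, mem_powerset] at hS hmax
  have hne : (nb E w \ T).Nonempty := by
    rw [← card_pos]; have := hbig w; omega
  have key : ∀ x ∈ nb E w \ T, ∃ y ∈ S, ∃ u, u ∉ T ∧ u ∈ nb E x ∧ u ∈ nb E y := by
    intro x hx
    by_contra hcon
    push Not at hcon
    have hxS : x ∉ S := by
      intro hxS
      have : (nb E x \ T).Nonempty := by rw [← card_pos]; have := hbig x; omega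
      obtain ⟨u, hu⟩ := this
      rw [mem_sdiff] at hu
      exact hcon x hxS u hu.2 hu.1 hu.1
    have := hmax (insert x S) ⟨insert_subset hx hS.1, by
      rw [coe_insert]
      refine hS.2.insert ?_
      intro y hy _
      rw [Finset.disjoint_left]
      intro u hu hu'
      rw [mem_sdiff] at hu hu'
      exact hcon y hy u hu.2 hu.1 hu'.1⟩
    rw [card_insert_of_notMem hxS] at this
    omega
  have hSne : S.Nonempty := by
    obtain ⟨x, hx⟩ := hne
    obtain ⟨y, hy, _⟩ := key x hx
    exact ⟨y, hy⟩
  have hcard : S.card ≤ 128 := by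
    have h1 : (S.biUnion (fun x => nb E x \ T)).card = ∑ x ∈ S, (nb E x \ T).card :=
      card_biUnion hS.2
    have h2 : (S.biUnion (fun x => nb E x \ T)).card ≤ Fintype.card V := card_le_univ _
    have h3 : S.card * Fintype.card V ≤ ∑ x ∈ S, 128 * (nb E x \ T).card := by
      have := Finset.card_nsmul_le_sum S (fun x => 128 * (nb E x \ T).card) (Fintype.card V)
        (fun x _ => hbig x)
      simpa using this
    rw [← mul_sum, ← h1] at h3
    by_contra hlt
    push Not at hlt
    have : 129 * Fintype.card V ≤ S.card * Fintype.card V := Nat.mul_le_mul_right _ hlt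
    omega
  have : Nonempty S := hSne.to_subtype
  obtain ⟨emb⟩ : Nonempty (S ↪ Fin 128) := by
    rw [Function.Embedding.nonempty_iff_card_le]; simpa using hcard
  have hsurj := Function.invFun_surjective emb.injective
  refine ⟨fun j => (Function.invFun emb j : S), ?_, ?_⟩
  · intro j
    have := hS.1 (Function.invFun emb j : S).2
    rwa [mem_sdiff] at this
  · intro x hx hxT
    obtain ⟨y, hy, u, hu⟩ := key x (mem_sdiff.2 ⟨hx, hxT⟩)
    obtain ⟨j, hj⟩ := hsurj ⟨y, hy⟩
    exact ⟨j, u, by simp only [hj]; exact hu⟩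

theorem prop_aux {p p' q r r' s s' : Prop} (a1 : (p ↔ q) ↔ (r ↔ s)) (a2 : (p' ↔ q) ↔ (r' ↔ s'))
    (b3 : r ↔ r') (b4 : s ↔ s') : p ↔ p' := by
  rw [← b3, ← b4] at a2
  tauto

theorem master1 {D : Type} [Fintype D] (k M : ℕ) (B : Finset (Finset (V × V)))
    (hB : ∀ E ∈ B, Cls E ∧ MinDeg E) (hk : 128 * k ≤ Fintype.card V) (hn : 0 < Fintype.card V)
    (S : (Fin k → V) → D → Finset (V × V) → Finset (Fin k → Finset V))
    (hM : ∀ t d E0, (S t d E0).card ≤ M)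
    (h : ∀ E ∈ B, ∃ t : Fin k → V, Function.Injective t ∧ ∃ d,
      (fun i => nb E (t i)) ∈ S t d (del E (univ.image t))) :
    B.card ≤ (Fintype.card V ^ k * (Fintype.card D *
      ((((Fintype.card V * 2) ^ 128) ^ k) * (2 ^ k) ^ k))) *
      (M * fcount (Fintype.card V - k)) := by
  let Code := (Fin k → V) × D × (Fin k → Fin 128 → V × Bool) × (Fin k → Fin k → Bool)
  have hcode : Fintype.card Code = Fintype.card V ^ k * (Fintype.card D *
      ((((Fintype.card V * 2) ^ 128) ^ k) * (2 ^ k) ^ k)) := by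
    simp [Code, Fintype.card_prod]
  rw [← hcode]
  refine master0 B k M (fun c : Code => univ.image c.1)
    (fun c E => Function.Injective c.1 ∧
      (fun i => nb E (c.1 i)) ∈ S c.1 c.2.1 (del E (univ.image c.1)) ∧
      (∀ i j, (c.2.2.1 i j).1 ∈ nb E (c.1 i) ∧ ((c.2.2.1 i j).2 = true ↔
        (c.1 i, (c.2.2.1 i j).1) ∈ E)) ∧
      (∀ i, ∀ x ∈ nb E (c.1 i), x ∉ univ.image c.1 → ∃ j, ∃ u, u ∉ univ.image c.1 ∧
        u ∈ nb E x ∧ u ∈ nb E (c.2.2.1 i j).1 ∧ (c.2.2.1 i j).1 ∉ univ.image c.1) ∧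
      (∀ i j, c.2.2.2 i j = true ↔ (c.1 i, c.1 j) ∈ E)) ?_ ?_ ?_
  · intro c E hc
    rw [card_image_of_injective _ hc.1]; simp
  · intro E hE
    refine ⟨(hB E hE).1, ?_⟩
    obtain ⟨t, ht, d, hd⟩ := h E hE
    have hc : (univ.image t).card = k := by rw [card_image_of_injective _ ht]; simp
    have hr := fun i => exists_refs (hB E hE).2 (univ.image t) (by rw [hc]; exact hk) hn (t i)
    choose ρ hρ1 hρ2 using hr
    refine ⟨(t, d, fun i j => (ρ i j, decide ((t i, ρ i j) ∈ E)),
      fun i j => decide ((t i, t j) ∈ E)), ht, hd, ?_, ?_, ?_⟩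
    · intro i j
      exact ⟨(hρ1 i j).1, by simp⟩
    · intro i x hx hxT
      obtain ⟨j, u, hu1, hu2, hu3⟩ := hρ2 i x hx hxT
      exact ⟨j, u, hu1, hu2, hu3, (hρ1 i j).2⟩
    · intro i j; simp
  · rintro ⟨t, d, ρ, c⟩ E0
    refine le_trans ?_ (hM t d E0)
    refine Finset.card_le_card_of_injOn (fun E i => nb E (t i)) ?_ ?_
    · intro E hE
      simp only [coe_filter, Set.mem_ofPred_eq] at hE
      obtain ⟨_, ⟨_, h2, _⟩, h3⟩ := hE
      rw [h3] at h2
      exact h2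
    · intro E hE E' hE' heq
      simp only [coe_filter, Set.mem_ofPred_eq] at hE hE'
      obtain ⟨hEB, ⟨ht, -, hρ, hρ', hc⟩, hdel⟩ := hE
      obtain ⟨hEB', ⟨-, -, hσ, hσ', hc'⟩, hdel'⟩ := hE'
      have hrow : ∀ i, nb E (t i) = nb E' (t i) := fun i => congrFun heq i
      have hC := (hB E hEB).1
      have hC' := (hB E' hEB').1
      have hoff : ∀ x y, x ∉ univ.image t → y ∉ univ.image t → ((x, y) ∈ E ↔ (x, y) ∈ E') := by
        intro x y hx hy
        have h1 := mem_del (E := E) (T := univ.image t) (x := x) (y := y)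
        have h2 := mem_del (E := E') (T := univ.image t) (x := x) (y := y)
        rw [hdel] at h1
        rw [hdel'] at h2
        tauto
      have hone : ∀ i y, y ∉ univ.image t → ((t i, y) ∈ E ↔ (t i, y) ∈ E') := by
        intro i y hy
        by_cases hyn : y ∈ nb E (t i)
        · have hyn' : y ∈ nb E' (t i) := by rw [← hrow]; exact hyn
          obtain ⟨j, u, hu, hux, huρ, hρT⟩ := hρ' i y hyn hy
          have a1 := orient hC (mem_nb.1 hyn) (mem_nb.1 (hρ i j).1) (mem_nb.1 hux).symm
            (mem_nb.1 huρ).symm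
          have hux' : Adj E' u y := by
            have := (mem_nb.1 hux).symm
            simpa only [Adj, hoff u y hu hy, hoff y u hy hu] using this
          have huρ' : Adj E' u (ρ i j).1 := by
            have := (mem_nb.1 huρ).symm
            simpa only [Adj, hoff u _ hu hρT, hoff _ u hρT hu] using this
          have a2 := orient hC' (mem_nb.1 hyn') (mem_nb.1 (hσ i j).1) hux' huρ'
          have b1 := (hρ i j).2
          have b2 := (hσ i j).2
          have b3 := hoff u y hu hy
          have b4 := hoff u _ hu hρT
          rw [← b1] at a1
          rw [← b2] at a2
          exact prop_aux a1 a2 b3 b4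
        · have hyn' : y ∉ nb E' (t i) := by rw [← hrow]; exact hyn
          rw [mem_nb] at hyn hyn'
          unfold Adj at hyn hyn'
          push Not at hyn hyn'
          exact ⟨fun h => absurd h hyn.1, fun h => absurd h hyn'.1⟩
      have hadj : ∀ i y, Adj E (t i) y ↔ Adj E' (t i) y := by
        intro i y; rw [← mem_nb, ← mem_nb, hrow]
      ext ⟨x, y⟩
      by_cases hx : x ∈ univ.image t
      · obtain ⟨i, -, rfl⟩ := mem_image.1 hx
        by_cases hy : y ∈ univ.image t
        · obtain ⟨j, -, rfl⟩ := mem_image.1 hy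
          rw [← hc, ← hc']
        · exact hone i y hy
      · by_cases hy : y ∈ univ.image t
        · obtain ⟨j, -, rfl⟩ := mem_image.1 hy
          have h1 := hone j x hx
          have h2 := hadj j x
          have h3 := hC.asym x (t j)
          have h4 := hC'.asym x (t j)
          have h5 := hC.asym (t j) x
          have h6 := hC'.asym (t j) x
          unfold Adj at h2
          clear hoff hone hadj hrow heq hc hc' hσ' hρ' hρ hσ hdel hdel'
          tauto
        · exact hoff x y hx hy

end
end KR

namespace KR
open Finset
open scoped Classical
set_option linter.unusedSectionVars false

section
variable {V : Type} [Fintype V] {E : Finset (V × V)}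

/-- Level structures. -/
def Lev {V : Type} (E : Finset (V × V)) (m : ℕ) (l : V → Fin m) : Prop :=
  ∀ x y, (x, y) ∈ E → (l y : ℕ) = l x + 1

theorem levels_one (hE : Cls E) (c : V → Prop) (hc : ∀ v w, Adj E v w → (c v ↔ ¬ c w))
    (h : ∀ b b', c b → c b' → ∀ z, Adj E z b → Adj E z b' → ((z, b) ∈ E ↔ (z, b') ∈ E)) :
    ∃ l : V → Fin 3, Lev E 3 l := by
  refine ⟨fun v => if c v then 1 else if ∃ b, (v, b) ∈ E then 0 else 2, ?_⟩
  intro x y hxy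
  have h1 := hc x y (Or.inl hxy)
  by_cases hx : c x
  · have hy : ¬ c y := by tauto
    have : ¬ ∃ b, (y, b) ∈ E := by
      rintro ⟨b, hb⟩
      have hb' : c b := by have := hc y b (Or.inl hb); tauto
      have := h x b hx hb' y (Or.inr hxy) (Or.inl hb)
      exact hE.asym _ _ hxy (this.2 hb)
    simp [hx, hy, this]
  · have hy : c y := by tauto
    have : ∃ b, (x, b) ∈ E := ⟨y, hxy⟩
    simp [hx, hy, this]

/-- Splitting of one side into a lower and an upper class. -/
structure Split (E : Finset (V × V)) (c low : V → Prop) : Prop where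
  lt : ∀ b b', c b → c b' → low b → ¬ low b' → ∀ z, Adj E z b → Adj E z b' →
    (b, z) ∈ E ∧ (z, b') ∈ E
  eq : ∀ b b', c b → c b' → (low b ↔ low b') → ∀ z, Adj E z b → Adj E z b' →
    ((z, b) ∈ E ↔ (z, b') ∈ E)

theorem split_exists (hE : Cls E) (c : V → Prop)
    (h3 : ∀ u v w, c u → c v → c w → ∃ x, Adj E x u ∧ Adj E x v ∧ Adj E x w)
    (h : ¬ ∀ b b', c b → c b' → ∀ z, Adj E z b → Adj E z b' → ((z, b) ∈ E ↔ (z, b') ∈ E)) :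
    ∃ low, Split E c low ∧ ∃ b1 x b3, c b1 ∧ c b3 ∧ low b1 ∧ ¬ low b3 ∧
      (b1, x) ∈ E ∧ (x, b3) ∈ E := by
  have hpath : ∃ b1 x b3, c b1 ∧ c b3 ∧ (b1, x) ∈ E ∧ (x, b3) ∈ E := by
    push Not at h
    obtain ⟨b, b', hb, hb', z, hz, hz', hh⟩ := h
    unfold Adj at hz hz'
    by_cases h1 : (z, b) ∈ E
    · have : (b', z) ∈ E := by tauto
      exact ⟨b', z, b, hb', hb, this, h1⟩
    · have : (b, z) ∈ E := by tauto
      have h2 : (z, b') ∈ E := by tauto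
      exact ⟨b, z, b', hb, hb', this, h2⟩
  obtain ⟨b1, x, b3, hb1, hb3, h1x, hx3⟩ := hpath
  -- for each b, common neighbours
  have hlow : ∀ b, c b → ∀ w, Adj E w b → Adj E w b1 → Adj E w b3 →
      ((b1, w) ∈ E ∧ (w, b3) ∈ E) := by
    intro b hb w _ h1 h3
    exact hE.four b1 x b3 w h1x hx3 h1.symm h3
  have horient : ∀ b b' z z', Adj E z b → Adj E z b' → Adj E z' b → Adj E z' b' →
      (((z, b) ∈ E ↔ (z, b') ∈ E) ↔ ((z', b) ∈ E ↔ (z', b') ∈ E)) :=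
    fun b b' z z' h1 h2 h3 h4 => orient hE h1 h2 h3 h4
  have nd : ∀ {z b}, Adj E z b → ((b, z) ∈ E ↔ (z, b) ∉ E) := by
    intro z b hz
    exact ⟨hE.asym _ _, fun h' => hz.resolve_left h'⟩
  let low : V → Prop := fun b => ∃ w, Adj E w b1 ∧ Adj E w b3 ∧ (b, w) ∈ E
  have hdich : ∀ b, c b → ∀ w, Adj E w b → Adj E w b1 → Adj E w b3 → (low b ↔ (b, w) ∈ E) := by
    intro b hb w hw h1 h3
    constructor
    · rintro ⟨w', h1', h3', hbw'⟩
      have a := horient b b1 w w' hw h1 (Or.inr hbw') h1'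
      have b1' := (hlow b hb w hw h1 h3).1
      have b2' := (hlow b hb w' (Or.inr hbw') h1' h3').1
      have n1 := nd hw
      have n2 := hE.asym _ _ b1'
      have n3 := hE.asym _ _ b2'
      have n4 := hE.asym _ _ hbw'
      tauto
    · intro hbw
      exact ⟨w, h1, h3, hbw⟩
  have hl1 : low b1 := ⟨x, Or.inr h1x, Or.inl hx3, h1x⟩
  have hl3 : ¬ low b3 := by
    intro hl
    have := (hdich b3 hb3 x (Or.inl hx3) (Or.inr h1x) (Or.inl hx3)).1 hl
    exact hE.asym _ _ this hx3
  clear_value low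
  clear h
  -- comparing b with b1 (when low) or with b3 (when not low)
  have hcmp1 : ∀ b, c b → low b → ∀ z, Adj E z b → Adj E z b1 → ((z, b) ∈ E ↔ (z, b1) ∈ E) := by
    intro b hb hl z hz hz1
    obtain ⟨w, hw, hw1, hw3⟩ := h3 b b1 b3 hb hb1 hb3
    have a := horient b b1 z w hz hz1 hw hw1
    have e := (hdich b hb w hw hw1 hw3).1 hl
    have e1 := (hlow b hb w hw hw1 hw3).1
    have n1 := hE.asym _ _ e
    have n2 := hE.asym _ _ e1
    exact a.2 ⟨fun h' => absurd h' n1, fun h' => absurd h' n2⟩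
  have hcmp3 : ∀ b, c b → ¬ low b → ∀ z, Adj E z b → Adj E z b3 →
      ((z, b) ∈ E ↔ (z, b3) ∈ E) := by
    intro b hb hl z hz hz3
    obtain ⟨w, hw, hw1, hw3⟩ := h3 b b1 b3 hb hb1 hb3
    have a := horient b b3 z w hz hz3 hw hw3
    have e := hdich b hb w hw hw1 hw3
    have e1 := (hlow b hb w hw hw1 hw3).2
    have n1 := nd hw
    have e2 : (w, b) ∈ E := by
      by_contra h'
      exact hl (e.2 (n1.2 h'))
    exact a.2 ⟨fun _ => e1, fun _ => e2⟩
  refine ⟨low, ⟨?_, ?_⟩, b1, x, b3, hb1, hb3, hl1, hl3, h1x, hx3⟩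
  · intro b b' hb hb' hl hl' z hz hz'
    obtain ⟨w, hw, hw1, hw3⟩ := h3 b b1 b3 hb hb1 hb3
    have e := (hdich b hb w hw hw1 hw3).1 hl
    have e1 := (hlow b hb w hw hw1 hw3).2
    obtain ⟨w', hw', hw3', hwb'⟩ := h3 b b3 b' hb hb3 hb'
    obtain ⟨f1, f2⟩ := hE.four b w b3 w' e e1 hw'.symm hw3'
    have f3 := (hcmp3 b' hb' hl' w' hwb' hw3').2 f2
    exact hE.four b w' b' z f1 f3 hz.symm hz'
  · intro b b' hb hb' hl z hz hz'
    by_cases h : low b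
    · have h' := hl.1 h
      obtain ⟨w, hw, hw', hw1⟩ := h3 b b' b1 hb hb' hb1
      have a1 := hcmp1 b hb h w hw hw1
      have a2 := hcmp1 b' hb' h' w hw' hw1
      have a3 := horient b b' z w hz hz' hw hw'
      exact a3.2 (a1.trans a2.symm)
    · have h' : ¬ low b' := fun h0 => h (hl.2 h0)
      obtain ⟨w, hw, hw', hw1⟩ := h3 b b' b3 hb hb' hb3
      have a1 := hcmp3 b hb h w hw hw1
      have a2 := hcmp3 b' hb' h' w hw' hw1
      have a3 := horient b b' z w hz hz' hw hw'
      exact a3.2 (a1.trans a2.symm)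

theorem four_levels (hE : Cls E) (c : V → Prop) (hc : ∀ v w, Adj E v w → (c v ↔ ¬ c w))
    (h2 : ∀ u v, ¬ c u → ¬ c v → ∃ x, Adj E x u ∧ Adj E x v)
    (lB lA : V → Prop) (sB : Split E c lB) (sA : Split E (fun v => ¬ c v) lA)
    (a0 : V) (ha0 : ¬ c a0) (la0 : lA a0)
    (b1 x b3 : V) (hb1 : c b1) (hb3 : c b3) (lb1 : lB b1) (lb3 : ¬ lB b3)
    (h1x : (b1, x) ∈ E) (hx3 : (x, b3) ∈ E) (hx : ¬ lA x) :
    ∃ l : V → Fin 4, Lev E 4 l ∧ (∃ v, l v = 0) ∧ ∃ v, l v = 3 := by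
  have hcx : ¬ c x := by have := hc b1 x (Or.inl h1x); tauto
  have nd : ∀ {z b}, Adj E z b → ((b, z) ∈ E ↔ (z, b) ∉ E) := by
    intro z b hz
    exact ⟨hE.asym _ _, fun h' => hz.resolve_left h'⟩
  -- neighbours of x
  have xlow : ∀ z, c z → lB z → Adj E z x → (z, x) ∈ E := by
    intro z hz hl ha
    have := sB.eq z b1 hz hb1 (by tauto) x ha.symm (Or.inr h1x)
    have n := hE.asym _ _ h1x
    exact ha.resolve_right (by tauto)
  have xhigh : ∀ z, c z → ¬ lB z → Adj E z x → (x, z) ∈ E := by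
    intro z hz hl ha
    exact (sB.lt b1 z hb1 hz lb1 hl x (Or.inr h1x) ha.symm).2
  have hh : ∀ a b, ¬ c a → c b → Adj E a b → ¬ lA a → lB b → (b, a) ∈ E := by
    intro a b ha hb hab hla hlb
    obtain ⟨z, hza, hzx⟩ := h2 a x ha hcx
    have hcz : c z := by have := hc z a hza; tauto
    have e := sA.eq a x ha hcx (by tauto) z hza hzx
    by_cases hlz : lB z
    · have := xlow z hcz hlz hzx
      have e2 := sB.eq z b hcz hb (by tauto) a hza.symm hab
      have n := nd hza
      have n2 := nd hab
      tauto
    · exact (sB.lt b z hb hcz hlb hlz a hab hza.symm).1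
  have hh2 : ∀ a b, ¬ c a → c b → Adj E a b → ¬ lA a → ¬ lB b → (a, b) ∈ E := by
    intro a b ha hb hab hla hlb
    obtain ⟨z, hza, hzx⟩ := h2 a x ha hcx
    have hcz : c z := by have := hc z a hza; tauto
    have e := sA.eq a x ha hcx (by tauto) z hza hzx
    by_cases hlz : lB z
    · exact (sB.lt z b hcz hb hlz hlb a hza.symm hab).2
    · have := xhigh z hcz hlz hzx
      have e2 := sB.eq z b hcz hb (by tauto) a hza.symm hab
      have n := nd hza
      have n2 := nd hzx
      tauto
  have hz : ∀ a, ¬ c a → lA a → ∃ z, c z ∧ lB z ∧ (a, z) ∈ E := by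
    intro a ha hla
    obtain ⟨z, hza, hzx⟩ := h2 a x ha hcx
    have hcz : c z := by have := hc z a hza; tauto
    obtain ⟨f1, f2⟩ := sA.lt a x ha hcx hla hx z hza hzx
    refine ⟨z, hcz, ?_, f1⟩
    by_contra hlz
    exact hE.asym _ _ f2 (xhigh z hcz hlz hzx)
  have ll : ∀ a b, ¬ c a → c b → Adj E a b → lA a → lB b → (a, b) ∈ E := by
    intro a b ha hb hab hla hlb
    obtain ⟨z, hcz, hlz, haz⟩ := hz a ha hla
    exact (sB.eq z b hcz hb (by tauto) a (Or.inl haz) hab).1 haz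
  have lh : ∀ a b, ¬ c a → c b → Adj E a b → lA a → lB b := by
    intro a b ha hb hab hla
    by_contra hlb
    obtain ⟨z, hcz, hlz, haz⟩ := hz a ha hla
    have := (sB.lt z b hcz hb hlz hlb a (Or.inl haz) hab).1
    exact hE.asym _ _ this haz
  refine ⟨fun v => if c v then (if lB v then 1 else 3) else (if lA v then 0 else 2), ?_,
    ⟨a0, by simp [ha0, la0]⟩, ⟨b3, by simp [hb3, lb3]⟩⟩
  intro p r hpr
  have hcc := hc p r (Or.inl hpr)
  have hn := hE.asym _ _ hpr
  by_cases hp : c p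
  · have hr : ¬ c r := by tauto
    have a1 := hh2 r p hr hp (Or.inr hpr)
    have a2 := ll r p hr hp (Or.inr hpr)
    have a3 := lh r p hr hp (Or.inr hpr)
    have b1 : ¬ lA r := by tauto
    have b2 : lB p := by tauto
    simp [hp, hr, b1, b2]
  · have hr : c r := by tauto
    have a1 := hh p r hp hr (Or.inl hpr)
    have a3 := lh p r hp hr (Or.inl hpr)
    by_cases b1 : lA p
    · have b2 : lB r := by tauto
      simp [hp, hr, b1, b2]
    · have b2 : ¬ lB r := by tauto
      simp [hp, hr, b1, b2]

theorem levels (hE : Cls E) (c : V → Prop) (hc : ∀ v w, Adj E v w → (c v ↔ ¬ c w))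
    (h3 : ∀ u v w, (c u ↔ c v) → (c v ↔ c w) → ∃ x, Adj E x u ∧ Adj E x v ∧ Adj E x w) :
    (∃ l : V → Fin 3, Lev E 3 l) ∨
    ∃ l : V → Fin 4, Lev E 4 l ∧ (∃ v, l v = 0) ∧ ∃ v, l v = 3 := by
  by_cases hB : ∀ b b', c b → c b' → ∀ z, Adj E z b → Adj E z b' → ((z, b) ∈ E ↔ (z, b') ∈ E)
  · exact Or.inl (levels_one hE c hc hB)
  have hc' : ∀ v w, Adj E v w → (¬ c v ↔ ¬ ¬ c w) := by
    intro v w h; have := hc v w h; tauto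
  by_cases hA : ∀ b b', ¬ c b → ¬ c b' → ∀ z, Adj E z b → Adj E z b' →
      ((z, b) ∈ E ↔ (z, b') ∈ E)
  · exact Or.inl (levels_one hE (fun v => ¬ c v) hc' hA)
  right
  obtain ⟨lB, sB, b1, x, b3, hb1, hb3, lb1, lb3, h1x, hx3⟩ :=
    split_exists hE c (fun u v w hu hv hw => h3 u v w (by tauto) (by tauto)) hB
  obtain ⟨lA, sA, a0, y, a2, ha0, ha2, la0, la2, h0y, hy2⟩ :=
    split_exists hE (fun v => ¬ c v) (fun u v w hu hv hw => h3 u v w (by tauto) (by tauto)) hA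
  have sB' : Split E (fun v => ¬ ¬ c v) lB := by simpa only [not_not] using sB
  by_cases hx : lA x
  · by_cases hy : lB y
    · exfalso
      have hcx : ¬ c x := by have := hc b1 x (Or.inl h1x); tauto
      have hcy : c y := by have := hc a0 y (Or.inl h0y); tauto
      obtain ⟨z, hzx, hz0, -⟩ := h3 x a0 a0 (by tauto) (by tauto)
      have hcz : c z := by have := hc z x hzx; tauto
      have e := sA.eq x a0 hcx ha0 (by tauto) z hzx hz0
      have n := hE.asym _ _ h0y
      have n1 := hE.asym _ _ h1x
      by_cases hlz : lB z
      · have e1 := sB.eq z b1 hcz hb1 (by tauto) x hzx.symm (Or.inr h1x)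
        have e2 := sB.eq z y hcz hcy (by tauto) a0 hz0.symm (Or.inl h0y)
        have n2 := hE.asym _ _ (e2.2 h0y)
        unfold Adj at hzx
        tauto
      · exact n (sB.lt y z hcy hcz hy hlz a0 (Or.inl h0y) hz0.symm).1
    · exact four_levels hE (fun v => ¬ c v) hc' (fun u v hu hv => by
        obtain ⟨w, hw⟩ := h3 u v v (by tauto) (by tauto)
        exact ⟨w, hw.1, hw.2.1⟩) lA lB sA sB' b1 (by tauto) lb1 a0 y a2 ha0 ha2 la0 la2 h0y hy2 hy
  · exact four_levels hE c hc (fun u v hu hv => by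
        obtain ⟨w, hw⟩ := h3 u v v (by tauto) (by tauto)
        exact ⟨w, hw.1, hw.2.1⟩) lB lA sB sA a0 ha0 la0 b1 x b3 hb1 hb3 lb1 lb3 h1x hx3 hx

end
end KR

namespace KR
open Finset
open scoped Classical
set_option linter.unusedSectionVars false

section
variable {V : Type} [Fintype V] {E : Finset (V × V)}

def GA (E : Finset (V × V)) (q : ℕ) : Prop :=
  ∀ Q : Finset V, Q.card = q → 9999 * Fintype.card V ≤ 20000 * (RR E Q).card

def GB (E : Finset (V × V)) (q : ℕ) : Prop :=
  ∀ v, ∀ Q ⊆ nb E v, Q.card = q → 20000 * (RR E Q).card ≤ 10001 * Fintype.card V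

def GJ (E : Finset (V × V)) (q j : ℕ) : Prop :=
  ∀ t : Fin j → V, Function.Injective t → ∀ Q : Fin j → Finset V,
    (∀ i, Q i ⊆ nb E (t i) ∧ (Q i).card = q ∧ Disjoint (Q i) (univ.image t)) →
    (¬ ∃ x, ∀ i, x ∈ nb E (t i)) →
    1000 * (univ.filter (fun x => ∀ i, x ∉ RR E (Q i))).card < Fintype.card V

/-- Distance of sets. -/
noncomputable def dd (A B : Finset V) : ℕ := (A \ B ∪ B \ A).card

theorem dd_comm (A B : Finset V) : dd A B = dd B A := by
  unfold dd; rw [union_comm]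

theorem dd_tri (A B C : Finset V) : dd A C ≤ dd A B + dd B C := by
  unfold dd
  refine le_trans (card_le_card ?_) (card_union_le _ _)
  intro x
  simp only [mem_union, mem_sdiff]
  tauto

theorem dd_compl (A B : Finset V) : dd Aᶜ Bᶜ = dd A B := by
  unfold dd
  congr 1
  ext x
  simp only [mem_union, mem_sdiff, mem_compl]
  tauto

theorem dd_compl_right (A B : Finset V) : dd Aᶜ B = dd A Bᶜ := by
  unfold dd
  congr 1
  ext x
  simp only [mem_union, mem_sdiff, mem_compl]
  tauto

theorem dd_self_compl (A : Finset V) : dd A Aᶜ = Fintype.card V := by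
  unfold dd
  rw [← card_univ]
  congr 1
  ext x
  simp only [mem_union, mem_sdiff, mem_compl, mem_univ, iff_true]
  tauto

theorem card_sdiff_le_dd (A B : Finset V) : (A \ B).card ≤ dd A B :=
  card_le_card subset_union_left

theorem dd_edge (A B : Finset V) :
    dd A Bᶜ + Fintype.card V = A.card + B.card + 2 * (Aᶜ ∩ Bᶜ).card := by
  have h1 : dd A Bᶜ = (A ∩ B).card + (Aᶜ ∩ Bᶜ).card := by
    unfold dd
    rw [← card_union_of_disjoint]
    · congr 1
      ext x
      simp only [mem_union, mem_sdiff, mem_compl, mem_inter]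
      tauto
    · rw [disjoint_left]; intro x; simp only [mem_inter, mem_compl]; tauto
  have h2 := card_union_add_card_inter A B
  have h3 : (A ∪ B).card + (Aᶜ ∩ Bᶜ).card = Fintype.card V := by
    rw [← compl_union, card_add_card_compl]
  omega

theorem exists_sub (hd : MinDeg E) (T : Finset V) (q : ℕ)
    (hn : 64 * (q + T.card) ≤ Fintype.card V) (v : V) :
    ∃ Q ⊆ nb E v, Q.card = q ∧ Disjoint Q T := by
  have h1 := hd v
  have h2 := le_card_sdiff T (nb E v)
  obtain ⟨Q, hQ, hq⟩ := exists_subset_card_eq (s := nb E v \ T) (n := q) (by omega)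
  refine ⟨Q, hQ.trans sdiff_subset, hq, ?_⟩
  exact disjoint_of_subset_left hQ sdiff_disjoint

theorem edge1 (hE : Cls E) {q : ℕ} (hB : GB E q) (hJ : GJ E q 2) {v w : V} (hvw : Adj E v w)
    {Q P : Finset V} (hQ : Q ⊆ nb E v) (hP : P ⊆ nb E w) (hQc : Q.card = q) (hPc : P.card = q)
    (hw : w ∉ Q) (hv : v ∉ P) :
    20000 * dd (RR E Q) (RR E P)ᶜ ≤ 42 * Fintype.card V := by
  have b1 := hB v Q hQ hQc
  have b2 := hB w P hP hPc
  have hne : v ≠ w := by rintro rfl; exact hE.irrefl _ hvw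
  have b3 := hJ ![v, w] (by
      intro i j; fin_cases i <;> fin_cases j <;> simp [hne, hne.symm]) ![Q, P] (by
      intro i
      fin_cases i
      · refine ⟨hQ, hQc, ?_⟩
        rw [disjoint_left]; intro x hx hx'
        simp only [mem_image, mem_univ, true_and, Fin.exists_fin_two] at hx'
        rcases hx' with h | h
        · simp at h hx; subst h; exact hE.irrefl _ (mem_nb.1 (hQ hx))
        · simp at h hx; subst h; exact hw hx
      · refine ⟨hP, hPc, ?_⟩
        rw [disjoint_left]; intro x hx hx'
        simp only [mem_image, mem_univ, true_and, Fin.exists_fin_two] at hx'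
        rcases hx' with h | h
        · simp at h hx; subst h; exact hv hx
        · simp at h hx; subst h; exact hE.irrefl _ (mem_nb.1 (hP hx))) (by
      rintro ⟨x, hx⟩
      have h0 := hx 0
      have h1 := hx 1
      simp only [Matrix.cons_val_zero, Matrix.cons_val_one, mem_nb] at h0 h1
      exact hE.tri _ _ _ hvw h1 h0)
  have e := dd_edge (RR E Q) (RR E P)
  have : (univ.filter (fun x => ∀ i, x ∉ RR E ((![Q, P] : Fin 2 → Finset V) i)))
      = (RR E Q)ᶜ ∩ (RR E P)ᶜ := by
    ext x
    simp [Fin.forall_fin_two]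
  rw [this] at b3
  omega

theorem same1 (hE : Cls E) (hd : MinDeg E) {q : ℕ} (hB : GB E q) (hJ : GJ E q 2)
    (hn : 64 * (2 * q + 4) ≤ Fintype.card V) {v : V}
    {Q P : Finset V} (hQ : Q ⊆ nb E v) (hP : P ⊆ nb E v) (hQc : Q.card = q) (hPc : P.card = q) :
    20000 * dd (RR E Q) (RR E P) ≤ 84 * Fintype.card V := by
  obtain ⟨W, hW, hWc, hWd⟩ := exists_sub hd (Q ∪ P) 1 (by
    have := card_union_le Q P; omega) v
  obtain ⟨w, rfl⟩ := card_eq_one.1 hWc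
  have hw : w ∈ nb E v := hW (mem_singleton_self _)
  simp only [disjoint_singleton_left, mem_union, not_or] at hWd
  obtain ⟨S, hS, hSc, hSd⟩ := exists_sub hd {v} q (by rw [card_singleton]; omega) w
  simp only [disjoint_singleton_right] at hSd
  have e1 := edge1 hE hB hJ (mem_nb.1 hw) hQ hS hQc hSc hWd.1 hSd
  have e2 := edge1 hE hB hJ (mem_nb.1 hw) hP hS hPc hSc hWd.2 hSd
  have := dd_tri (RR E Q) (RR E S)ᶜ (RR E P)
  rw [dd_comm (RR E S)ᶜ (RR E P)] at this
  omega

theorem edge2 (hE : Cls E) (hd : MinDeg E) {q : ℕ} (hB : GB E q) (hJ : GJ E q 2)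
    (hn : 64 * (2 * q + 4) ≤ Fintype.card V) {v w : V} (hvw : Adj E v w)
    {Q P : Finset V} (hQ : Q ⊆ nb E v) (hP : P ⊆ nb E w) (hQc : Q.card = q) (hPc : P.card = q) :
    20000 * dd (RR E Q) (RR E P)ᶜ ≤ 210 * Fintype.card V := by
  obtain ⟨S, hS, hSc, hSd⟩ := exists_sub hd {w} q (by rw [card_singleton]; omega) v
  obtain ⟨T, hT, hTc, hTd⟩ := exists_sub hd {v} q (by rw [card_singleton]; omega) w
  simp only [disjoint_singleton_right] at hSd hTd
  have e1 := edge1 hE hB hJ hvw hS hT hSc hTc hSd hTd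
  have e2 := same1 hE hd hB hJ hn hQ hS hQc hSc
  have e3 := same1 hE hd hB hJ hn hT hP hTc hPc
  have a1 := dd_tri (RR E Q) (RR E S) (RR E P)ᶜ
  have a2 := dd_tri (RR E S) (RR E T)ᶜ (RR E P)ᶜ
  rw [dd_compl] at a2
  omega

theorem common (hd : MinDeg E) {q : ℕ} (j : ℕ) (hj : j ≤ 3)
    (hE : Cls E) (hB : GB E q) (hJ2 : GJ E q 2) (hJ : GJ E q j)
    (hn : 64 * (2 * q + 4) ≤ Fintype.card V)
    (Y : Finset V) (hY : 20000 * Y.card ≤ 10001 * Fintype.card V)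
    (Qf : V → Finset V) (hQf : ∀ v, Qf v ⊆ nb E v ∧ (Qf v).card = q)
    (t : Fin j → V) (ht : Function.Injective t)
    (h : ∀ i, 20000 * dd (RR E (Qf (t i))) Y ≤ 840 * Fintype.card V) :
    ∃ x, ∀ i, x ∈ nb E (t i) := by
  by_contra hcon
  have hTc : (univ.image t).card ≤ 3 := by
    refine card_image_le.trans ?_; simpa using hj
  choose Q hQ using fun i => exists_sub hd (univ.image t) q (by omega) (t i)
  have b := hJ t ht Q hQ hcon
  have h1 : ∀ i, 20000 * dd (RR E (Q i)) Y ≤ 924 * Fintype.card V := by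
    intro i
    have e := same1 hE hd hB hJ2 hn (hQ i).1 (hQf (t i)).1 (hQ i).2.1 (hQf (t i)).2
    have a := dd_tri (RR E (Q i)) (RR E (Qf (t i))) Y
    have := h i
    omega
  have h2 : (univ : Finset V) ⊆ Y ∪ (univ.filter (fun x => ∀ i, x ∉ RR E (Q i))) ∪
      univ.biUnion (fun i => RR E (Q i) \ Y) := by
    intro x _
    simp only [mem_union, mem_filter, mem_univ, true_and, mem_biUnion, mem_sdiff]
    by_cases hx : x ∈ Y
    · tauto
    · by_cases h : ∀ i, x ∉ RR E (Q i)
      · tauto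
      · push Not at h
        obtain ⟨i, hi⟩ := h
        exact Or.inr ⟨i, hi, hx⟩
  have h3 := card_le_card h2
  have h4 := card_union_le (Y ∪ (univ.filter (fun x => ∀ i, x ∉ RR E (Q i))))
    (univ.biUnion (fun i => RR E (Q i) \ Y))
  have h5 := card_union_le Y (univ.filter (fun x => ∀ i, x ∉ RR E (Q i)))
  have h6 : (univ.biUnion (fun i => RR E (Q i) \ Y)).card ≤ ∑ i, dd (RR E (Q i)) Y :=
    card_biUnion_le.trans (sum_le_sum fun i _ => card_sdiff_le_dd _ _)
  have h7 : 20000 * ∑ i, dd (RR E (Q i)) Y ≤ 3 * (924 * Fintype.card V) := by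
    rw [mul_sum]
    refine (sum_le_card_nsmul univ _ (924 * Fintype.card V) (fun i _ => h1 i)).trans ?_
    rw [card_univ, Fintype.card_fin, smul_eq_mul]
    exact Nat.mul_le_mul_right _ hj
  rw [card_univ] at h3
  omega

theorem struct (hE : Cls E) (hd : MinDeg E) {q : ℕ} (hq : 1 ≤ q) (hA : GA E q) (hB : GB E q)
    (hJ2 : GJ E q 2) (hJ3 : GJ E q 3)
    (hn : 64 * (2 * q + 4) ≤ Fintype.card V) :
    (∃ l : V → Fin 3, Lev E 3 l) ∨
    ∃ l : V → Fin 4, Lev E 4 l ∧ (∃ v, l v = 0) ∧ ∃ v, l v = 3 := by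
  have hQ := fun v => exists_sub hd ∅ q (by rw [card_empty]; omega) v
  choose Q hQs hQc _ using hQ
  have hne : Nonempty V := by rw [← Fintype.card_pos_iff]; omega
  obtain ⟨v0⟩ := hne
  set R : V → Finset V := fun v => RR E (Q v) with hR
  have H1 : ∀ v w, Adj E v w → 20000 * dd (R v) (R w)ᶜ ≤ 210 * Fintype.card V :=
    fun v w h => edge2 hE hd hB hJ2 hn h (hQs v) (hQs w) (hQc v) (hQc w)
  have H2 : ∀ v, 9999 * Fintype.card V ≤ 20000 * (R v).card := fun v => hA _ (hQc v)
  have H3 : ∀ v, 20000 * (R v).card ≤ 10001 * Fintype.card V := fun v => hB v _ (hQs v) (hQc v)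
  have H4 : ∀ v u, u ∈ R v → 20000 * dd (R u) (R v) ≤ 420 * Fintype.card V := by
    intro v u hu
    simp only [hR, RR, mem_biUnion] at hu
    obtain ⟨z, hz, hzu⟩ := hu
    have hz' := mem_nb.1 (hQs v hz)
    have a1 := H1 v z hz'
    have a2 := H1 u z (mem_nb.1 hzu).symm
    have a3 := dd_tri (R u) (R z)ᶜ (R v)
    rw [dd_comm (R z)ᶜ (R v)] at a3
    omega
  obtain ⟨q0, hq0⟩ : (Q v0).Nonempty := by rw [← card_pos, hQc]; omega
  have hq0' := mem_nb.1 (hQs v0 hq0)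
  have hXq := H1 v0 q0 hq0'
  have hnear : ∀ v, 20000 * dd (R v) (R v0) ≤ 840 * Fintype.card V ∨
      20000 * dd (R v) (R v0)ᶜ ≤ 840 * Fintype.card V := by
    intro v
    have hu : ∃ u ∈ nb E v, u ∈ (R v0) ∪ R q0 := by
      by_contra hcon
      push Not at hcon
      have h1 : nb E v ⊆ (R q0)ᶜ \ (R v0) := by
        intro u hu
        have := hcon u hu
        simp only [mem_union, not_or] at this
        simp [this]
      have h2 := card_le_card h1
      have h3 := card_sdiff_le_dd (R q0)ᶜ (R v0)
      rw [dd_comm (R q0)ᶜ] at h3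
      have h4 := hd v
      omega
    obtain ⟨u, huv, hu⟩ := hu
    have a1 := H1 v u (mem_nb.1 huv)
    rcases mem_union.1 hu with hu | hu
    · right
      have a2 := H4 v0 u hu
      have a3 := dd_tri (R v) (R u)ᶜ (R v0)ᶜ
      rw [dd_compl] at a3
      omega
    · left
      have a2 := H4 q0 u hu
      have a3 := dd_tri (R v) (R u)ᶜ (R q0)ᶜ
      have a4 := dd_tri (R v) (R q0)ᶜ (R v0)
      rw [dd_compl] at a3
      rw [dd_comm (R q0)ᶜ (R v0)] at a4
      omega
  set c : V → Prop := fun v => 20000 * dd (R v) (R v0) ≤ 840 * Fintype.card V with hcdef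
  have hc : ∀ v w, Adj E v w → (c v ↔ ¬ c w) := by
    intro v w hvw
    have a1 := H1 v w hvw
    have t0 := dd_self_compl (R v0)
    constructor
    · intro hv hw
      have t1 := dd_tri (R v0) (R v) (R v0)ᶜ
      have t2 := dd_tri (R v) (R w)ᶜ (R v0)ᶜ
      rw [dd_compl] at t2
      rw [dd_comm (R v0) (R v)] at t1
      simp only [hcdef] at hv hw
      omega
    · intro hw
      by_contra hv
      have hv := (hnear v).resolve_left hv
      have hw := (hnear w).resolve_left hw
      have t1 := dd_tri (R v0)ᶜ (R v) (R v0)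
      have t2 := dd_tri (R v) (R w)ᶜ (R v0)
      rw [dd_compl_right] at t2
      rw [dd_comm (R v0)ᶜ (R v), dd_comm (R v0)ᶜ (R v0)] at t1
      omega
  refine levels hE c hc ?_
  intro u v w huv hvw
  obtain ⟨Y, hY, hu, hv, hw⟩ : ∃ Y : Finset V, 20000 * Y.card ≤ 10001 * Fintype.card V ∧
      20000 * dd (R u) Y ≤ 840 * Fintype.card V ∧ 20000 * dd (R v) Y ≤ 840 * Fintype.card V ∧
      20000 * dd (R w) Y ≤ 840 * Fintype.card V := by
    by_cases h : c u
    · exact ⟨(R v0), H3 v0, h, huv.1 h, hvw.1 (huv.1 h)⟩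
    · have h' : ¬ c v := fun h0 => h (huv.2 h0)
      have h'' : ¬ c w := fun h0 => h' (hvw.2 h0)
      refine ⟨(R v0)ᶜ, ?_, (hnear u).resolve_left h, (hnear v).resolve_left h',
        (hnear w).resolve_left h''⟩
      have := H2 v0
      have := card_add_card_compl (R v0)
      omega
  have two : ∀ a b, 20000 * dd (R a) Y ≤ 840 * Fintype.card V →
      20000 * dd (R b) Y ≤ 840 * Fintype.card V → ∃ x, Adj E x a ∧ Adj E x b := by
    intro a b ha hb
    by_cases hab : a = b
    · subst hab
      have : (nb E a).Nonempty := by rw [← card_pos]; have := hd a; omega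
      obtain ⟨x, hx⟩ := this
      exact ⟨x, (mem_nb.1 hx).symm, (mem_nb.1 hx).symm⟩
    · obtain ⟨x, hx⟩ := common hd 2 (by norm_num) hE hB hJ2 hJ2 hn Y hY Q
        (fun v => ⟨hQs v, hQc v⟩) ![a, b] (by
          intro i j; fin_cases i <;> fin_cases j <;> simp [hab, Ne.symm hab]) (by
          intro i; fin_cases i
          · exact ha
          · exact hb)
      exact ⟨x, (mem_nb.1 (hx 0)).symm, (mem_nb.1 (hx 1)).symm⟩
  by_cases e1 : u = v
  · subst e1
    obtain ⟨x, h1, h2⟩ := two u w hu hw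
    exact ⟨x, h1, h1, h2⟩
  by_cases e2 : v = w
  · subst e2
    obtain ⟨x, h1, h2⟩ := two u v hu hv
    exact ⟨x, h1, h2, h2⟩
  by_cases e3 : u = w
  · subst e3
    obtain ⟨x, h1, h2⟩ := two u v hu hv
    exact ⟨x, h1, h2, h1⟩
  obtain ⟨x, hx⟩ := common hd 3 le_rfl hE hB hJ2 hJ3 hn Y hY Q
        (fun v => ⟨hQs v, hQc v⟩) ![u, v, w] (by
          intro i j; fin_cases i <;> fin_cases j <;>
            simp [e1, e2, e3, Ne.symm e1, Ne.symm e2, Ne.symm e3]) (by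
          intro i; fin_cases i
          · exact hu
          · exact hv
          · exact hw)
  exact ⟨x, (mem_nb.1 (hx 0)).symm, (mem_nb.1 (hx 1)).symm, (mem_nb.1 (hx 2)).symm⟩

end
end KR

namespace KR
open Finset
open scoped Classical
set_option linter.unusedSectionVars false

/-- Exponentially small compared with `2^{kn/2} f(n-k)`. -/
def CB (k : ℕ) (cnt : ℕ → ℕ) : Prop :=
  ∃ (C : ℝ) (D : ℕ) (r : ℝ), 0 ≤ C ∧ 0 < r ∧ r < 1 ∧ ∃ n0, ∀ n ≥ n0,
    (cnt n : ℝ) ≤ C * n ^ D * r ^ n * (2 : ℝ) ^ ((k * n : ℝ) / 2) * fcount (n - k)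

theorem toCB (k : ℕ) (cnt dc M : ℕ → ℕ) (n0 : ℕ) (C0 : ℝ) (D0 : ℕ) (r : ℝ)
    (hC0 : 0 ≤ C0) (hr : 0 < r) (hr1 : r < 1)
    (h : ∀ n ≥ n0, cnt n ≤ (n ^ k * (dc n * ((((n * 2) ^ 128) ^ k) * (2 ^ k) ^ k))) *
      (M n * fcount (n - k)))
    (h2 : ∀ n ≥ n0, (dc n * M n : ℝ) ≤ C0 * n ^ D0 * r ^ n * (2 : ℝ) ^ ((k * n : ℝ) / 2)) :
    CB k cnt := by
  refine ⟨C0 * (((2 : ℝ) ^ 128) ^ k * ((2 : ℝ) ^ k) ^ k), D0 + k + 128 * k, r, by positivity, hr,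
    hr1, n0, ?_⟩
  intro n hn
  have h1 : (cnt n : ℝ) ≤ ((n ^ k * (dc n * ((((n * 2) ^ 128) ^ k) * (2 ^ k) ^ k))) *
      (M n * fcount (n - k)) : ℝ) := by exact_mod_cast h n hn
  refine h1.trans ?_
  have h3 := mul_le_mul_of_nonneg_right (h2 n hn)
    (show (0 : ℝ) ≤ n ^ k * ((((n : ℝ) * 2) ^ 128) ^ k * (2 ^ k) ^ k) * fcount (n - k) by positivity)
  refine le_trans (le_of_eq ?_) (h3.trans (le_of_eq ?_))
  · ring
  · rw [mul_pow (n : ℝ) 2 128, mul_pow, pow_add, pow_add, pow_mul]; ring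

section
variable {V : Type} [Fintype V]

theorem count_GA (q : ℕ) (hk : 128 * q ≤ Fintype.card V) (hn : 0 < Fintype.card V) :
    (univ.filter (fun E : Finset (V × V) => Cls E ∧ MinDeg E ∧ ¬ GA E q)).card ≤
      (Fintype.card V ^ q * (2 ^ Fintype.card V *
      ((((Fintype.card V * 2) ^ 128) ^ q) * (2 ^ q) ^ q))) *
      ((2 ^ (9999 * Fintype.card V / 20000)) ^ q * fcount (Fintype.card V - q)) := by
  have := master1 (D := Finset V) q ((2 ^ (9999 * Fintype.card V / 20000)) ^ q)
    (univ.filter (fun E : Finset (V × V) => Cls E ∧ MinDeg E ∧ ¬ GA E q))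
    (fun E hE => by simp only [mem_filter, mem_univ, true_and] at hE; exact ⟨hE.1, hE.2.1⟩) hk hn
    (fun t d E0 => if 20000 * d.card < 9999 * Fintype.card V then
      Fintype.piFinset (fun _ => d.powerset) else ∅) ?_ ?_
  · simpa only [Fintype.card_finset] using this
  · intro t d E0
    split_ifs with h
    · rw [Fintype.card_piFinset]
      simp only [card_powerset, prod_const, card_univ, Fintype.card_fin]
      exact Nat.pow_le_pow_left (Nat.pow_le_pow_right (by norm_num) (by omega)) _
    · simp
  · intro E hE
    simp only [mem_filter, mem_univ, true_and] at hE
    obtain ⟨hC, hd, hG⟩ := hE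
    unfold GA at hG
    push Not at hG
    obtain ⟨Q, hQ, hlt⟩ := hG
    refine ⟨fun i => ((Q.equivFinOfCardEq hQ).symm i : V), ?_, RR E Q, ?_⟩
    · exact Subtype.val_injective.comp (Equiv.injective _)
    · dsimp only
      rw [if_pos hlt, Fintype.mem_piFinset]
      intro i
      rw [mem_powerset]
      exact subset_biUnion_of_mem (nb E) ((Q.equivFinOfCardEq hQ).symm i).2

theorem RR_del_subset (E : Finset (V × V)) (T Q : Finset V) : RR (del E T) Q ⊆ RR E Q := by
  intro x hx
  simp only [RR, mem_biUnion, mem_nb, adj_del] at hx ⊢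
  obtain ⟨z, hz, h, _⟩ := hx
  exact ⟨z, hz, h⟩

theorem RR_subset_del (E : Finset (V × V)) (T Q : Finset V) (h : Disjoint Q T) :
    RR E Q ⊆ RR (del E T) Q ∪ T := by
  intro x hx
  simp only [RR, mem_biUnion, mem_nb, adj_del, mem_union] at hx ⊢
  obtain ⟨z, hz, h'⟩ := hx
  by_cases hxT : x ∈ T
  · exact Or.inr hxT
  · exact Or.inl ⟨z, hz, h', disjoint_left.1 h hz, hxT⟩

theorem nb_subset_compl {E : Finset (V × V)} (hE : Cls E) {v : V} {Q : Finset V} (T : Finset V)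
    (hQ : Q ⊆ nb E v) : nb E v ⊆ (RR (del E T) Q)ᶜ := by
  intro x hx
  rw [mem_compl]
  intro hx'
  have := RR_del_subset E T Q hx'
  simp only [RR, mem_biUnion] at this
  obtain ⟨z, hz, hzx⟩ := this
  exact hE.tri v z x (mem_nb.1 (hQ hz)) (mem_nb.1 hzx) (mem_nb.1 hx)

theorem exists_enum {q : ℕ} (Q : Finset V) (hQ : Q.card = q) :
    ∃ d : Fin q → V, univ.image d = Q := by
  refine ⟨fun i => ((Q.equivFinOfCardEq hQ).symm i : V), ?_⟩
  ext x
  simp only [mem_image, mem_univ, true_and]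
  constructor
  · rintro ⟨i, rfl⟩; exact ((Q.equivFinOfCardEq hQ).symm i).2
  · intro hx; exact ⟨Q.equivFinOfCardEq hQ ⟨x, hx⟩, by simp⟩

theorem count_GB (q : ℕ) (hk : 128 ≤ Fintype.card V) :
    (univ.filter (fun E : Finset (V × V) => Cls E ∧ MinDeg E ∧ ¬ GB E q)).card ≤
      (Fintype.card V ^ 1 * (Fintype.card V ^ q *
      ((((Fintype.card V * 2) ^ 128) ^ 1) * (2 ^ 1) ^ 1))) *
      ((2 ^ (9999 * Fintype.card V / 20000 + 1)) * fcount (Fintype.card V - 1)) := by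
  have := master1 (D := Fin q → V) 1 (2 ^ (9999 * Fintype.card V / 20000 + 1))
    (univ.filter (fun E : Finset (V × V) => Cls E ∧ MinDeg E ∧ ¬ GB E q))
    (fun E hE => by simp only [mem_filter, mem_univ, true_and] at hE; exact ⟨hE.1, hE.2.1⟩)
    (by omega) (by omega)
    (fun t d E0 => if 20000 * ((RR E0 (univ.image d))ᶜ).card ≤ 9999 * Fintype.card V + 20000 then
      Fintype.piFinset (fun _ => ((RR E0 (univ.image d))ᶜ).powerset) else ∅) ?_ ?_
  · simpa only [Fintype.card_pi, prod_const, card_univ, Fintype.card_fin] using this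
  · intro t d E0
    split_ifs with h
    · rw [Fintype.card_piFinset]
      simp only [card_powerset, prod_const, card_univ, Fintype.card_fin, pow_one]
      exact (Nat.pow_le_pow_right (by norm_num) (by omega))
    · simp
  · intro E hE
    simp only [mem_filter, mem_univ, true_and] at hE
    obtain ⟨hC, hd, hG⟩ := hE
    unfold GB at hG
    push Not at hG
    obtain ⟨v, Q, hQv, hQ, hlt⟩ := hG
    obtain ⟨d, hdQ⟩ := exists_enum Q hQ
    have him : (univ.image (fun _ : Fin 1 => v)) = {v} := by ext x; simp [eq_comm]
    refine ⟨fun _ => v, fun _ _ _ => Subsingleton.elim _ _, d, ?_⟩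
    dsimp only
    rw [hdQ, him]
    have h1 := card_le_card (RR_subset_del E {v} Q (by
      rw [disjoint_singleton_right]; intro hv; exact hC.irrefl _ (mem_nb.1 (hQv hv))))
    have h2 := card_union_le (RR (del E {v}) Q) {v}
    have h3 := card_add_card_compl (RR (del E {v}) Q)
    rw [card_singleton] at h2
    rw [if_pos (by omega), Fintype.mem_piFinset]
    intro i
    rw [mem_powerset]
    exact nb_subset_compl hC {v} hQv

theorem count_rows {j : ℕ} (C : Fin j → Finset V) :
    ((Fintype.piFinset (fun i => (C i).powerset)).filter
        (fun S => ¬ ∃ x, ∀ i, x ∈ S i)).card *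
      (2 ^ j) ^ (univ.filter (fun x => ∀ i, x ∈ C i)).card ≤
    (2 ^ j - 1) ^ (univ.filter (fun x => ∀ i, x ∈ C i)).card * 2 ^ (∑ i, (C i).card) := by
  let F : V → Finset (Finset (Fin j)) := fun x =>
    if ∀ i, x ∈ C i then univ.erase univ else (univ.filter (fun i => x ∈ C i)).powerset
  have h1 : ((Fintype.piFinset (fun i => (C i).powerset)).filter
        (fun S => ¬ ∃ x, ∀ i, x ∈ S i)).card ≤ (Fintype.piFinset F).card := by
    refine card_le_card_of_injOn (fun S x => univ.filter (fun i => x ∈ S i)) ?_ ?_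
    · intro S hS
      simp only [coe_filter, Fintype.mem_piFinset, mem_powerset, Set.mem_ofPred_eq] at hS
      rw [mem_coe, Fintype.mem_piFinset]
      intro x
      simp only [F]
      split_ifs with h
      · rw [mem_erase]
        refine ⟨?_, mem_univ _⟩
        intro hh
        refine hS.2 ⟨x, fun i => ?_⟩
        have : i ∈ univ.filter (fun i => x ∈ S i) := by rw [hh]; exact mem_univ _
        exact (mem_filter.1 this).2
      · rw [mem_powerset]
        intro i hi
        simp only [mem_filter, mem_univ, true_and] at hi ⊢
        exact hS.1 i hi
    · intro S _ S' _ heq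
      funext i
      ext x
      have := congrFun heq x
      have h2 : i ∈ univ.filter (fun i => x ∈ S i) ↔ i ∈ univ.filter (fun i => x ∈ S' i) := by
        dsimp only at this; rw [this]
      simpa using h2
  refine (Nat.mul_le_mul_right _ h1).trans (le_of_eq ?_)
  have h2 : ∀ a : ℕ, a ^ (univ.filter (fun x => ∀ i, x ∈ C i)).card =
      ∏ x, if ∀ i, x ∈ C i then a else 1 := by
    intro a; rw [prod_ite]; simp
  have h3 : ∑ i, (C i).card = ∑ x, (univ.filter (fun i => x ∈ C i)).card := by
    simp only [card_filter]
    rw [sum_comm]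
    simp
  rw [Fintype.card_piFinset, h2, h2, h3, ← prod_pow_eq_pow_sum, ← prod_mul_distrib,
    ← prod_mul_distrib]
  refine prod_congr rfl fun x _ => ?_
  simp only [F]
  split_ifs with h
  · rw [card_erase_of_mem (mem_univ _), card_univ, Fintype.card_finset, Fintype.card_fin]
    congr 2
    rw [filter_true_of_mem (fun i _ => h i)]; simp
  · simp

theorem count_GJ (q j : ℕ) (hj : 0 < j) (hk : 128 * j ≤ Fintype.card V) :
    (univ.filter (fun E : Finset (V × V) => Cls E ∧ MinDeg E ∧ GA E q ∧ ¬ GJ E q j)).card ≤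
      (Fintype.card V ^ j * ((Fintype.card V ^ q) ^ j *
      ((((Fintype.card V * 2) ^ 128) ^ j) * (2 ^ j) ^ j))) *
      (⌊(2 : ℝ) ^ (j * (10001 * (Fintype.card V : ℝ) / 20000 + j)) *
        (1 - 1 / 2 ^ j : ℝ) ^ ((Fintype.card V : ℝ) / 1000)⌋₊ *
        fcount (Fintype.card V - j)) := by
  have := master1 (D := Fin j → Fin q → V) j (⌊(2 : ℝ) ^ (j * (10001 * (Fintype.card V : ℝ) / 20000 + j)) *
        (1 - 1 / 2 ^ j : ℝ) ^ ((Fintype.card V : ℝ) / 1000)⌋₊)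
    (univ.filter (fun E : Finset (V × V) => Cls E ∧ MinDeg E ∧ GA E q ∧ ¬ GJ E q j))
    (fun E hE => by simp only [mem_filter, mem_univ, true_and] at hE; exact ⟨hE.1, hE.2.1⟩)
    (by omega) (by omega)
    (fun t d E0 => if (∀ i, 20000 * ((RR E0 (univ.image (d i)))ᶜ).card ≤
        10001 * Fintype.card V + 20000 * j) ∧
        Fintype.card V ≤ 1000 * (univ.filter (fun x => ∀ i, x ∈ (RR E0 (univ.image (d i)))ᶜ)).card then
      (Fintype.piFinset (fun i => ((RR E0 (univ.image (d i)))ᶜ).powerset)).filter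
        (fun S => ¬ ∃ x, ∀ i, x ∈ S i) else ∅) ?_ ?_
  · simpa only [Fintype.card_pi, prod_const, card_univ, Fintype.card_fin] using this
  · intro t d E0
    split_ifs with h
    · obtain ⟨h1, h2⟩ := h
      refine Nat.le_floor ?_
      have := count_rows (fun i => (RR E0 (univ.image (d i)))ᶜ)
      set N := ((Fintype.piFinset (fun i => ((RR E0 (univ.image (d i)))ᶜ).powerset)).filter
        (fun S => ¬ ∃ x, ∀ i, x ∈ S i)).card
      set m := (univ.filter (fun x => ∀ i, x ∈ (RR E0 (univ.image (d i)))ᶜ)).card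
      set s := ∑ i, ((RR E0 (univ.image (d i)))ᶜ).card with hs
      have hs' : 20000 * s ≤ j * (10001 * Fintype.card V + 20000 * j) := by
        rw [hs, mul_sum]
        refine (sum_le_card_nsmul _ _ _ (fun i _ => h1 i)).trans (by simp)
      have hpos : (0 : ℝ) < 2 ^ j := by positivity
      have hone : (1 : ℝ) < 2 ^ j := one_lt_pow₀ (by norm_num) (by omega)
      have hb0 : (0 : ℝ) < 1 - 1 / 2 ^ j := by
        rw [sub_pos, div_lt_one hpos]; exact hone
      have hb1 : (1 : ℝ) - 1 / 2 ^ j ≤ 1 := by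
        have : (0 : ℝ) ≤ 1 / 2 ^ j := by positivity
        linarith
      have hR : (N : ℝ) * (2 ^ j) ^ m ≤ (2 ^ j - 1) ^ m * 2 ^ s := by
        have h' : ((N * (2 ^ j) ^ m : ℕ) : ℝ) ≤ (((2 ^ j - 1) ^ m * 2 ^ s : ℕ) : ℝ) := by
          exact_mod_cast this
        push_cast [Nat.cast_sub (Nat.one_le_two_pow : 1 ≤ 2 ^ j)] at h'
        exact h'
      have hN : (N : ℝ) ≤ (1 - 1 / 2 ^ j) ^ m * 2 ^ s := by
        rw [← le_div_iff₀ (by positivity)] at hR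
        refine hR.trans (le_of_eq ?_)
        have : (1 - 1 / 2 ^ j : ℝ) = (2 ^ j - 1) / 2 ^ j := by field_simp
        rw [this, div_pow]; ring
      refine hN.trans ?_
      rw [mul_comm]
      refine mul_le_mul ?_ ?_ (by positivity) (by positivity)
      · rw [← Real.rpow_natCast]
        refine Real.rpow_le_rpow_of_exponent_le (by norm_num) ?_
        have : (20000 * s : ℝ) ≤ j * (10001 * Fintype.card V + 20000 * j) := by exact_mod_cast hs'
        have e : (j * (10001 * (Fintype.card V : ℝ) / 20000 + j)) =
          (j * (10001 * Fintype.card V + 20000 * j)) / 20000 := by ring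
        rw [e, le_div_iff₀ (by norm_num)]
        linarith
      · rw [← Real.rpow_natCast]
        refine Real.rpow_le_rpow_of_exponent_ge hb0 hb1 ?_
        rw [div_le_iff₀ (by norm_num), mul_comm]
        exact_mod_cast h2
    · simp
  · intro E hE
    simp only [mem_filter, mem_univ, true_and] at hE
    obtain ⟨hC, hd, hA, hG⟩ := hE
    unfold GJ at hG
    push Not at hG
    obtain ⟨t, ht, Q, hQ, hno, hlt⟩ := hG
    choose d hdQ using fun i => exists_enum (Q i) (hQ i).2.1
    refine ⟨t, ht, d, ?_⟩
    simp only [hdQ]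
    have hTc : (univ.image t).card ≤ j := by
      refine card_image_le.trans ?_; simp
    rw [if_pos]
    · rw [mem_filter, Fintype.mem_piFinset]
      refine ⟨fun i => ?_, ?_⟩
      · rw [mem_powerset]
        exact nb_subset_compl hC _ (hQ i).1
      · push Not
        exact hno
    · refine ⟨fun i => ?_, ?_⟩
      · have h1 := card_le_card (RR_subset_del E (univ.image t) (Q i) (hQ i).2.2)
        have h2 := card_union_le (RR (del E (univ.image t)) (Q i)) (univ.image t)
        have h3 := card_add_card_compl (RR (del E (univ.image t)) (Q i))
        have h4 := hA (Q i) (hQ i).2.1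
        omega
      · refine hlt.trans (Nat.mul_le_mul_left _ (card_le_card ?_))
        intro x hx
        simp only [mem_filter, mem_univ, true_and, mem_compl] at hx ⊢
        exact fun i h' => hx i (RR_del_subset _ _ _ h')

theorem count_small_sets (n : ℕ) (hV : Fintype.card V = n) :
    ((univ.filter (fun S : Finset V => 64 * S.card < n)).card : ℝ) ≤
      (64 : ℝ) ^ ((n : ℝ) / 64) * (65 / 64) ^ n := by
  have h1 : ∑ S : Finset V, (1 / 64 : ℝ) ^ S.card = (65 / 64) ^ n := by
    have := Finset.prod_one_add (f := fun _ : V => (1 / 64 : ℝ)) univ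
    simp only [prod_const, card_univ, powerset_univ, hV] at this
    rw [← this]; norm_num
  rw [← h1, mul_sum, card_filter]
  push_cast
  refine sum_le_sum fun S _ => ?_
  split_ifs with h
  · rw [one_div, inv_pow, ← Real.rpow_natCast, ← Real.rpow_neg (by norm_num),
      ← Real.rpow_add (by norm_num)]
    apply Real.one_le_rpow (by norm_num)
    have : (64 * S.card : ℝ) < n := by exact_mod_cast h
    linarith
  · positivity

theorem count_MinDeg (n : ℕ) (hV : Fintype.card V = n) :
    (univ.filter (fun E : Finset (V × V) => Cls E ∧ ¬ MinDeg E)).card ≤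
      n * ((univ.filter (fun S : Finset V => 64 * S.card < n)).card ^ 2 * fcount (n - 1)) := by
  subst hV
  refine master0 (Code := V) _ 1 _ (fun v => {v}) (fun v E => 64 * (nb E v).card < Fintype.card V)
    (by simp) ?_ ?_
  · intro E hE
    simp only [mem_filter, mem_univ, true_and] at hE
    refine ⟨hE.1, ?_⟩
    have := hE.2
    unfold MinDeg at this
    push Not at this
    exact this
  · intro v E0
    rw [sq, ← card_product]
    refine card_le_card_of_injOn (fun E => (univ.filter (fun x => (v, x) ∈ E),
      univ.filter (fun x => (x, v) ∈ E))) ?_ ?_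
    · intro E hE
      simp only [coe_filter, mem_filter, mem_univ, true_and, Set.mem_ofPred_eq] at hE
      rw [mem_coe, mem_product]
      have hlt := hE.2.1
      refine ⟨mem_filter.2 ⟨mem_univ _, lt_of_le_of_lt (Nat.mul_le_mul_left _ (card_le_card ?_)) hlt⟩,
        mem_filter.2 ⟨mem_univ _, lt_of_le_of_lt (Nat.mul_le_mul_left _ (card_le_card ?_)) hlt⟩⟩
      · intro x; simp only [mem_filter, mem_univ, true_and, mem_nb]; exact Or.inl
      · intro x; simp only [mem_filter, mem_univ, true_and, mem_nb]; exact Or.inr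
    · intro E hE E' hE' heq
      simp only [coe_filter, mem_filter, mem_univ, true_and, Set.mem_ofPred_eq] at hE hE'
      have hd : del E {v} = del E' {v} := hE.2.2.trans hE'.2.2.symm
      simp only [Prod.mk.injEq] at heq
      have e1 : ∀ x, (v, x) ∈ E ↔ (v, x) ∈ E' := by
        intro x
        have : x ∈ univ.filter (fun x => (v, x) ∈ E) ↔ x ∈ univ.filter (fun x => (v, x) ∈ E') := by
          rw [heq.1]
        simpa using this
      have e2 : ∀ x, (x, v) ∈ E ↔ (x, v) ∈ E' := by
        intro x
        have : x ∈ univ.filter (fun x => (x, v) ∈ E) ↔ x ∈ univ.filter (fun x => (x, v) ∈ E') := by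
          rw [heq.2]
        simpa using this
      ext ⟨x, y⟩
      by_cases hx : x = v
      · subst hx; exact e1 y
      by_cases hy : y = v
      · subst hy; exact e2 x
      have h1 := mem_del (E := E) (T := {v}) (x := x) (y := y)
      have h2 := mem_del (E := E') (T := {v}) (x := x) (y := y)
      rw [hd, h2] at h1
      simp only [mem_singleton, hx, hy, not_false_eq_true, and_true] at h1
      exact h1.symm

end

theorem CB_MinDeg : CB 1 (fun n =>
    (univ.filter (fun E : Finset (Fin n × Fin n) => Cls E ∧ ¬ MinDeg E)).card) := by
  refine ⟨1, 1, (2 : ℝ) ^ (-(1 / 4) : ℝ), zero_le_one, by positivity,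
    Real.rpow_lt_one_of_one_lt_of_neg (by norm_num) (by norm_num), 0, ?_⟩
  intro n _
  have h1 := count_MinDeg (V := Fin n) n (by simp)
  have h2 := count_small_sets (V := Fin n) n (by simp)
  have h3 : ((65 / 64 : ℝ)) ≤ 2 ^ (1 / 32 : ℝ) := by
    rw [Real.le_rpow_iff_log_le (by norm_num) (by norm_num)]
    have : Real.log ((65 / 64) ^ 32) ≤ Real.log 2 := Real.log_le_log (by norm_num) (by norm_num)
    rw [Real.log_pow] at this
    push_cast at this
    linarith
  have h4 : ((64 : ℝ)) = 2 ^ (6 : ℝ) := by norm_num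
  have h5 : (64 : ℝ) ^ ((n : ℝ) / 64) * (65 / 64) ^ n ≤ 2 ^ ((n : ℝ) / 8) := by
    calc (64 : ℝ) ^ ((n : ℝ) / 64) * (65 / 64) ^ n
        ≤ (64 : ℝ) ^ ((n : ℝ) / 64) * (2 ^ (1 / 32 : ℝ)) ^ n := by gcongr
      _ = 2 ^ ((n : ℝ) / 8) := by
        rw [← Real.rpow_natCast, h4, ← Real.rpow_mul (by norm_num), ← Real.rpow_mul (by norm_num),
          ← Real.rpow_add (by norm_num)]
        congr 1; ring
  have h6 := h2.trans h5
  set s := (univ.filter (fun S : Finset (Fin n) => 64 * S.card < n)).card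
  have h7 : (s : ℝ) ^ 2 ≤ (2 ^ ((n : ℝ) / 8)) ^ 2 := by gcongr
  calc ((univ.filter (fun E : Finset (Fin n × Fin n) => Cls E ∧ ¬ MinDeg E)).card : ℝ)
      ≤ n * (s ^ 2 * fcount (n - 1)) := by exact_mod_cast h1
    _ ≤ n * ((2 ^ ((n : ℝ) / 8)) ^ 2 * fcount (n - 1)) := by gcongr
    _ = _ := by
      have : ((2 : ℝ) ^ ((n : ℝ) / 8)) ^ 2 =
          ((2 : ℝ) ^ (-(1 / 4) : ℝ)) ^ n * 2 ^ (((1 : ℕ) * n : ℝ) / 2) := by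
        rw [← Real.rpow_natCast, ← Real.rpow_natCast, ← Real.rpow_mul (by norm_num),
          ← Real.rpow_mul (by norm_num), ← Real.rpow_add (by norm_num)]
        congr 1; push_cast; ring
      rw [this]; ring

theorem CB_GA (q : ℕ) (hq : q = 40000) : CB q (fun n =>
    (univ.filter (fun E : Finset (Fin n × Fin n) => Cls E ∧ MinDeg E ∧ ¬ GA E q)).card) := by
  refine toCB q _ (fun n => 2 ^ n) (fun n => (2 ^ (9999 * n / 20000)) ^ q) (128 * q + 1) 1 0
    (1 / 2) zero_le_one (by norm_num) (by norm_num) ?_ ?_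
  · intro n hn
    have := count_GA (V := Fin n) q (by simp; omega) (by simp; omega)
    simpa only [Fintype.card_fin] using this
  · intro n hn
    push_cast
    rw [pow_zero, one_mul, one_mul, ← Real.rpow_natCast, ← Real.rpow_natCast, ← Real.rpow_natCast,
      ← Real.rpow_natCast, ← Real.rpow_mul (by norm_num), ← Real.rpow_add (by norm_num), one_div,
      Real.inv_rpow (by norm_num), ← Real.rpow_neg (by norm_num), ← Real.rpow_add (by norm_num)]
    refine Real.rpow_le_rpow_of_exponent_le (by norm_num) ?_
    have h1 : 20000 * (9999 * n / 20000) ≤ 9999 * n := Nat.mul_div_le _ _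
    have h2 : (20000 * ((9999 * n / 20000 : ℕ) : ℝ)) ≤ 9999 * n := by exact_mod_cast h1
    have h3 : (q : ℝ) = 40000 := by rw [hq]; norm_num
    rw [h3]
    linarith

theorem CB_GB (q : ℕ) : CB 1 (fun n =>
    (univ.filter (fun E : Finset (Fin n × Fin n) => Cls E ∧ MinDeg E ∧ ¬ GB E q)).card) := by
  refine toCB 1 _ (fun n => n ^ q) (fun n => (2 ^ (9999 * n / 20000 + 1))) 128 2 q
    (2 ^ (-(1 / 20000) : ℝ)) zero_le_two (by positivity)
    (Real.rpow_lt_one_of_one_lt_of_neg (by norm_num) (by norm_num)) ?_ ?_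
  · intro n hn
    have := count_GB (V := Fin n) q (by simp; omega)
    simpa only [Fintype.card_fin] using this
  · intro n hn
    push_cast
    have : (2 : ℝ) ^ (9999 * n / 20000 + 1) ≤ 2 * ((2 ^ (-(1 / 20000) : ℝ)) ^ n *
        (2 : ℝ) ^ ((1 * n : ℝ) / 2)) := by
      rw [pow_succ, mul_comm]
      refine mul_le_mul_of_nonneg_left ?_ (by norm_num)
      rw [← Real.rpow_natCast, ← Real.rpow_natCast (2 ^ (-(1 / 20000) : ℝ)),
        ← Real.rpow_mul (by norm_num), ← Real.rpow_add (by norm_num)]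
      refine Real.rpow_le_rpow_of_exponent_le (by norm_num) ?_
      have h1 : 20000 * (9999 * n / 20000) ≤ 9999 * n := Nat.mul_div_le _ _
      have h2 : (20000 * ((9999 * n / 20000 : ℕ) : ℝ)) ≤ 9999 * n := by exact_mod_cast h1
      linarith
    have h' := mul_le_mul_of_nonneg_left this (show (0 : ℝ) ≤ n ^ q by positivity)
    refine h'.trans (le_of_eq ?_)
    ring

theorem CB_GJ (q j : ℕ) (hj : 0 < j) (hρ : (2 : ℝ) ^ j * (1 - 1 / 2 ^ j) ^ 20 < 1) : CB j (fun n =>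
    (univ.filter (fun E : Finset (Fin n × Fin n) =>
      Cls E ∧ MinDeg E ∧ GA E q ∧ ¬ GJ E q j)).card) := by
  have hpos : (0 : ℝ) < 2 ^ j := by positivity
  have hone : (1 : ℝ) < 2 ^ j := one_lt_pow₀ (by norm_num) (by omega)
  have hb0 : (0 : ℝ) < 1 - 1 / 2 ^ j := by
    rw [sub_pos, div_lt_one hpos]; exact hone
  set b : ℝ := 1 - 1 / 2 ^ j with hb
  refine toCB j _ (fun n => (n ^ q) ^ j)
    (fun n => ⌊(2 : ℝ) ^ (j * (10001 * (n : ℝ) / 20000 + j)) * b ^ ((n : ℝ) / 1000)⌋₊)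
    (128 * j) ((2 : ℝ) ^ (j * j)) (q * j)
    (((2 : ℝ) ^ j * b ^ 20) ^ (1 / 20000 : ℝ)) (by positivity) (by positivity)
    (Real.rpow_lt_one (by positivity) hρ (by norm_num)) ?_ ?_
  · intro n hn
    have := count_GJ (V := Fin n) q j hj (by simpa using hn)
    simpa only [Fintype.card_fin] using this
  · intro n hn
    push_cast
    have h1 := Nat.floor_le (show 0 ≤ (2 : ℝ) ^ (j * (10001 * (n : ℝ) / 20000 + j)) *
      b ^ ((n : ℝ) / 1000) by positivity)
    refine (mul_le_mul_of_nonneg_left h1 (by positivity)).trans (le_of_eq ?_)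
    have e1 : (((2 : ℝ) ^ j * b ^ 20) ^ (1 / 20000 : ℝ)) ^ n =
        2 ^ ((j * n : ℝ) / 20000) * b ^ ((n : ℝ) / 1000) := by
      rw [Real.mul_rpow (by positivity) (by positivity), mul_pow]
      congr 1
      · rw [← Real.rpow_natCast, ← Real.rpow_natCast, ← Real.rpow_mul (by norm_num),
          ← Real.rpow_mul (by norm_num)]
        congr 1; ring
      · rw [← Real.rpow_natCast, ← Real.rpow_natCast, ← Real.rpow_mul hb0.le,
          ← Real.rpow_mul hb0.le]
        congr 1; push_cast; ring
    have e2 : (2 : ℝ) ^ (j * (10001 * (n : ℝ) / 20000 + j)) =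
        2 ^ ((j * n : ℝ) / 20000) * 2 ^ ((j * n : ℝ) / 2) * 2 ^ (j * j) := by
      rw [← Real.rpow_natCast, ← Real.rpow_add (by norm_num), ← Real.rpow_add (by norm_num)]
      congr 1; push_cast; ring
    rw [e1, e2, ← pow_mul]
    ring

end KR

namespace KR
open Finset
open scoped Classical
set_option linter.unusedSectionVars false

section
variable {V : Type} [Fintype V]

/-- Allowed edges for a level function. -/
noncomputable def UU {m : ℕ} (l : V → Fin m) : Finset (V × V) :=
  univ.filter (fun e => (l e.2 : ℕ) = l e.1 + 1)

noncomputable def LL {m : ℕ} (l : V → Fin m) (i : Fin m) : Finset V := univ.filter (fun v => l v = i)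

theorem mem_LL {m : ℕ} {l : V → Fin m} {i : Fin m} {v : V} : v ∈ LL l i ↔ l v = i := by simp [LL]

theorem mem_UU {m : ℕ} {l : V → Fin m} {x y : V} : (x, y) ∈ UU l ↔ (l y : ℕ) = l x + 1 := by
  simp [UU]

theorem lev_iff {m : ℕ} {l : V → Fin m} {E : Finset (V × V)} : Lev E m l ↔ E ⊆ UU l := by
  constructor
  · rintro h ⟨x, y⟩ hxy
    exact mem_UU.2 (h x y hxy)
  · intro h x y hxy
    exact mem_UU.1 (h hxy)

theorem lev_filter {m : ℕ} (l : V → Fin m) :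
    univ.filter (fun E : Finset (V × V) => Lev E m l) = (UU l).powerset := by
  ext E; simp [lev_iff]

theorem sum_LL {m : ℕ} (l : V → Fin m) : ∑ i, (LL l i).card = Fintype.card V := by
  rw [← card_univ, card_eq_sum_card_fiberwise (f := l) (t := univ) (by simp)]
  rfl

theorem weight_sum {m : ℕ} (w : Fin m → ℝ) :
    ∑ l : V → Fin m, ∏ i, w i ^ (LL l i).card = (∑ i, w i) ^ Fintype.card V := by
  have h := Finset.prod_univ_sum (fun _ : V => (univ : Finset (Fin m))) (fun _ i => w i)
  simp only [prod_const, card_univ, Fintype.piFinset_univ] at h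
  rw [h]
  refine sum_congr rfl fun l _ => ?_
  rw [← Finset.prod_fiberwise_of_maps_to (s := univ) (t := univ) (g := l) (by simp)]
  refine prod_congr rfl fun i _ => ?_
  rw [prod_congr rfl (g := fun _ => w i)]
  · simp [LL]
  · intro v hv; rw [(mem_filter.1 hv).2]

theorem card_UU3 (l : V → Fin 3) :
    (UU l).card = (LL l 1).card * (Fintype.card V - (LL l 1).card) := by
  have h : UU l = LL l 0 ×ˢ LL l 1 ∪ LL l 1 ×ˢ LL l 2 := by
    ext ⟨x, y⟩
    rw [mem_UU, mem_union, mem_product, mem_product, mem_LL, mem_LL, mem_LL, mem_LL]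
    generalize l x = a
    generalize l y = b
    fin_cases a <;> fin_cases b <;> simp
  have hs := sum_LL l
  rw [Fin.sum_univ_three] at hs
  rw [h, card_union_of_disjoint, card_product, card_product, ← hs]
  · rw [show (LL l 0).card + (LL l 1).card + (LL l 2).card - (LL l 1).card =
      (LL l 0).card + (LL l 2).card by omega]
    ring
  · rw [disjoint_left]
    rintro ⟨x, y⟩ h1 h2
    rw [mem_product, mem_LL, mem_LL] at h1 h2
    have := h1.1.symm.trans h2.1
    exact absurd this (by decide)

theorem card_UU4 (l : V → Fin 4) :
    4 * ((UU l).card + (LL l 0).card * (LL l 3).card) ≤ Fintype.card V ^ 2 := by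
  have h : UU l ⊆ LL l 0 ×ˢ LL l 1 ∪ LL l 1 ×ˢ LL l 2 ∪ LL l 2 ×ˢ LL l 3 := by
    rintro ⟨x, y⟩
    rw [mem_UU, mem_union, mem_union, mem_product, mem_product, mem_product, mem_LL, mem_LL,
      mem_LL, mem_LL, mem_LL, mem_LL]
    generalize l x = a
    generalize l y = b
    fin_cases a <;> fin_cases b <;> simp
  have hs := sum_LL l
  rw [Fin.sum_univ_four] at hs
  have h1 := card_le_card h
  have h2 := card_union_le (LL l 0 ×ˢ LL l 1 ∪ LL l 1 ×ˢ LL l 2) (LL l 2 ×ˢ LL l 3)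
  have h3 := card_union_le (LL l 0 ×ˢ LL l 1) (LL l 1 ×ˢ LL l 2)
  simp only [card_product] at h1 h2 h3
  rw [← hs]
  generalize (LL l 0).card = a at *
  generalize (LL l 1).card = b at *
  generalize (LL l 2).card = c at *
  generalize (LL l 3).card = d at *
  have h4 : (UU l).card ≤ a * b + b * c + c * d := by omega
  have h5 : 4 * (a * b + b * c + c * d + a * d) ≤ (a + b + c + d) ^ 2 := by
    zify
    nlinarith [sq_nonneg ((a : ℤ) + c - b - d)]
  nlinarith

theorem pow_le_quarter {u n : ℕ} (h : 4 * u ≤ n ^ 2) : (2 : ℝ) ^ u ≤ 2 ^ ((n : ℝ) ^ 2 / 4) := by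
  rw [← Real.rpow_natCast]
  refine Real.rpow_le_rpow_of_exponent_le (by norm_num) ?_
  have : (4 * u : ℝ) ≤ n ^ 2 := by exact_mod_cast h
  linarith

theorem four_ineq (p r : ℕ) (hp : 1 ≤ p) (hr : 1 ≤ r) :
    (1 / 2 : ℝ) ^ (p * r) ≤ 16 * ((1 / 4) ^ p * (1 / 4) ^ r) + 10 * ((1 / 10) ^ p * (1 / 2) ^ r) +
      10 * ((1 / 2) ^ p * (1 / 10) ^ r) := by
  have a1 : (0 : ℝ) ≤ 16 * ((1 / 4) ^ p * (1 / 4) ^ r) := by positivity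
  have a2 : (0 : ℝ) ≤ 10 * ((1 / 10) ^ p * (1 / 2) ^ r) := by positivity
  have a3 : (0 : ℝ) ≤ 10 * ((1 / 2) ^ p * (1 / 10) ^ r) := by positivity
  by_cases h1 : p = 1
  · subst h1
    have : (10 : ℝ) * ((1 / 10) ^ 1 * (1 / 2) ^ r) = (1 / 2) ^ (1 * r) := by rw [one_mul]; ring
    linarith
  by_cases h2 : r = 1
  · subst h2
    have : (10 : ℝ) * ((1 / 2) ^ p * (1 / 10) ^ 1) = (1 / 2) ^ (p * 1) := by rw [mul_one]; ring
    linarith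
  have : (1 / 2 : ℝ) ^ (p * r) ≤ 16 * ((1 / 4) ^ p * (1 / 4) ^ r) := by
    have e : (16 : ℝ) * ((1 / 4) ^ p * (1 / 4) ^ r) = (1 / 2) ^ (2 * p + 2 * r - 4) := by
      obtain ⟨s, hs⟩ : ∃ s, p + r = s + 2 := ⟨p + r - 2, by omega⟩
      rw [← pow_add, hs, show 2 * p + 2 * r - 4 = 2 * s by omega, pow_mul, pow_add]
      norm_num
      ring
    rw [e]
    refine pow_le_pow_of_le_one (by norm_num) (by norm_num) ?_
    obtain ⟨a, rfl⟩ : ∃ a, p = a + 2 := ⟨p - 2, by omega⟩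
    obtain ⟨b, rfl⟩ : ∃ b, r = b + 2 := ⟨r - 2, by omega⟩
    have : 2 * (a + 2) + 2 * (b + 2) - 4 = 2 * a + 2 * b + 4 := by omega
    rw [this]
    nlinarith [Nat.zero_le (a * b)]
  linarith

theorem four_count : ((univ.filter (fun E : Finset (V × V) =>
      ∃ l : V → Fin 4, Lev E 4 l ∧ (∃ v, l v = 0) ∧ ∃ v, l v = 3)).card : ℝ) ≤
    36 * (26 / 10) ^ Fintype.card V * 2 ^ ((Fintype.card V : ℝ) ^ 2 / 4) := by
  have h1 : (univ.filter (fun E : Finset (V × V) =>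
      ∃ l : V → Fin 4, Lev E 4 l ∧ (∃ v, l v = 0) ∧ ∃ v, l v = 3)) ⊆
      (univ.filter (fun l : V → Fin 4 => (∃ v, l v = 0) ∧ ∃ v, l v = 3)).biUnion
        (fun l => (UU l).powerset) := by
    intro E hE
    simp only [mem_filter, mem_univ, true_and, mem_biUnion, mem_powerset] at hE ⊢
    obtain ⟨l, hl, h⟩ := hE
    exact ⟨l, h, lev_iff.1 hl⟩
  have h2 := (card_le_card h1).trans card_biUnion_le
  have h3 : ((univ.filter (fun E : Finset (V × V) =>
      ∃ l : V → Fin 4, Lev E 4 l ∧ (∃ v, l v = 0) ∧ ∃ v, l v = 3)).card : ℝ) ≤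
      ∑ l ∈ univ.filter (fun l : V → Fin 4 => (∃ v, l v = 0) ∧ ∃ v, l v = 3),
        (((UU l).powerset.card : ℕ) : ℝ) := by exact_mod_cast h2
  refine h3.trans ?_
  have w1 := weight_sum (V := V) (m := 4) ![1 / 4, 1, 1, 1 / 4]
  have w2 := weight_sum (V := V) (m := 4) ![1 / 10, 1, 1, 1 / 2]
  have w3 := weight_sum (V := V) (m := 4) ![1 / 2, 1, 1, 1 / 10]
  simp only [Fin.prod_univ_four, Fin.sum_univ_four, Matrix.cons_val_zero, Matrix.cons_val_one,
    Matrix.cons_val, one_pow, mul_one] at w1 w2 w3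
  set q : ℝ := 2 ^ ((Fintype.card V : ℝ) ^ 2 / 4) with hq
  have hq0 : 0 < q := by positivity
  calc ∑ l ∈ univ.filter (fun l : V → Fin 4 => (∃ v, l v = 0) ∧ ∃ v, l v = 3),
        (((UU l).powerset.card : ℕ) : ℝ)
      ≤ ∑ l ∈ univ.filter (fun l : V → Fin 4 => (∃ v, l v = 0) ∧ ∃ v, l v = 3),
        q * (16 * ((1 / 4) ^ (LL l 0).card * (1 / 4) ^ (LL l 3).card) +
          10 * ((1 / 10) ^ (LL l 0).card * (1 / 2) ^ (LL l 3).card) +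
          10 * ((1 / 2) ^ (LL l 0).card * (1 / 10) ^ (LL l 3).card)) := by
        refine sum_le_sum fun l hl => ?_
        simp only [mem_filter, mem_univ, true_and] at hl
        obtain ⟨⟨v, hv⟩, ⟨v', hv'⟩⟩ := hl
        have p0 : 1 ≤ (LL l 0).card := card_pos.2 ⟨v, mem_LL.2 hv⟩
        have p3 : 1 ≤ (LL l 3).card := card_pos.2 ⟨v', mem_LL.2 hv'⟩
        have e := pow_le_quarter (card_UU4 l)
        rw [← hq, pow_add] at e
        rw [card_powerset]
        push_cast
        calc (2 : ℝ) ^ (UU l).card ≤ q * (1 / 2) ^ ((LL l 0).card * (LL l 3).card) := by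
              rw [one_div, inv_pow, ← div_eq_mul_inv, le_div_iff₀ (by positivity)]
              exact e
          _ ≤ _ := by
              refine mul_le_mul_of_nonneg_left (four_ineq _ _ p0 p3) hq0.le
    _ ≤ ∑ l : V → Fin 4,
        q * (16 * ((1 / 4) ^ (LL l 0).card * (1 / 4) ^ (LL l 3).card) +
          10 * ((1 / 10) ^ (LL l 0).card * (1 / 2) ^ (LL l 3).card) +
          10 * ((1 / 2) ^ (LL l 0).card * (1 / 10) ^ (LL l 3).card)) := by
        refine sum_le_sum_of_subset_of_nonneg (filter_subset _ _) ?_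
        intro l _ _
        positivity
    _ = q * (16 * (1 / 4 + 1 + 1 + 1 / 4) ^ Fintype.card V +
        10 * (1 / 10 + 1 + 1 + 1 / 2) ^ Fintype.card V +
        10 * (1 / 2 + 1 + 1 + 1 / 10) ^ Fintype.card V) := by
        rw [← mul_sum, sum_add_distrib, sum_add_distrib, ← mul_sum, ← mul_sum, ← mul_sum, w1, w2,
          w3]
    _ ≤ _ := by
        have e1 : ((1 / 4 + 1 + 1 + 1 / 4 : ℝ)) ^ Fintype.card V ≤ (26 / 10) ^ Fintype.card V := by
          gcongr; norm_num
        have e2 : ((1 / 10 + 1 + 1 + 1 / 2 : ℝ)) = 26 / 10 := by norm_num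
        have e3 : ((1 / 2 + 1 + 1 + 1 / 10 : ℝ)) = 26 / 10 := by norm_num
        rw [e2, e3]
        nlinarith

/-- A good level structure. -/
structure Nice (E : Finset (V × V)) (l : V → Fin 3) : Prop where
  lev : Lev E 3 l
  mid : Fintype.card V ≤ 100 * (LL l 1).card
  inn : ∀ y, l y = 1 → Fintype.card V ≤ 100 * (E.filter (fun e => e.2 = y)).card
  out : ∀ y, l y = 1 → Fintype.card V ≤ 100 * (E.filter (fun e => e.1 = y)).card
  deg : ∀ x, l x ≠ 1 → Fintype.card V ≤ 100 * (E.filter (fun e => e.1 = x ∨ e.2 = x)).card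

theorem cnt1 (U : Finset (V × V)) (φ : V × V → Prop) (p n : ℕ) (hp : p ≤ (U.filter φ).card) :
    ((U.powerset.filter (fun E => 100 * (E.filter φ).card < n)).card : ℝ) ≤
      2 ^ U.card * (5 ^ ((n : ℝ) / 100) * (3 / 5) ^ p) := by
  set F := U.filter φ with hF
  have h1 : (U.powerset.filter (fun E => 100 * (E.filter φ).card < n)).card ≤
      ((U \ F).powerset ×ˢ (F.powerset.filter (fun S => 100 * S.card < n))).card := by
    refine card_le_card_of_injOn (fun E => (E.filter (fun e => ¬ φ e), E.filter φ)) ?_ ?_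
    · intro E hE
      simp only [coe_filter, mem_powerset, Set.mem_ofPred_eq] at hE
      rw [mem_coe, mem_product, mem_powerset, mem_filter, mem_powerset]
      refine ⟨?_, filter_subset_filter _ hE.1, hE.2⟩
      intro e he
      rw [mem_filter] at he
      rw [mem_sdiff, hF, mem_filter]
      exact ⟨hE.1 he.1, fun h => he.2 h.2⟩
    · intro E _ E' _ heq
      simp only [Prod.mk.injEq] at heq
      rw [← filter_union_filter_not_eq φ E, ← filter_union_filter_not_eq φ E', heq.1, heq.2]
  have h2 : ((F.powerset.filter (fun S => 100 * S.card < n)).card : ℝ) ≤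
      5 ^ ((n : ℝ) / 100) * (6 / 5) ^ F.card := by
    have e : ∑ S ∈ F.powerset, (1 / 5 : ℝ) ^ S.card = (6 / 5) ^ F.card := by
      have := Finset.prod_one_add (f := fun _ : V × V => (1 / 5 : ℝ)) F
      simp only [prod_const] at this
      rw [← this]; norm_num
    rw [← e, mul_sum, card_filter]
    push_cast
    refine sum_le_sum fun S _ => ?_
    split_ifs with h
    · rw [one_div, inv_pow, ← Real.rpow_natCast, ← Real.rpow_neg (by norm_num),
        ← Real.rpow_add (by norm_num)]
      apply Real.one_le_rpow (by norm_num)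
      have : (100 * S.card : ℝ) < n := by exact_mod_cast h
      linarith
    · positivity
  have h3 : (U \ F).card + F.card = U.card := card_sdiff_add_card_eq_card (filter_subset _ _)
  rw [card_product, card_powerset] at h1
  have h4 : ((U.powerset.filter (fun E => 100 * (E.filter φ).card < n)).card : ℝ) ≤
      2 ^ (U \ F).card * ((F.powerset.filter (fun S => 100 * S.card < n)).card : ℝ) := by
    exact_mod_cast h1
  refine h4.trans ((mul_le_mul_of_nonneg_left h2 (by positivity)).trans ?_)
  have h5 : (3 / 5 : ℝ) ^ F.card ≤ (3 / 5) ^ p :=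
    pow_le_pow_of_le_one (by norm_num) (by norm_num) hp
  have h6 : (6 / 5 : ℝ) ^ F.card = 2 ^ F.card * (3 / 5) ^ F.card := by
    rw [← mul_pow]; norm_num
  rw [h6, ← h3, pow_add]
  have : (2 : ℝ) ^ (U \ F).card * (5 ^ ((n : ℝ) / 100) * (2 ^ F.card * (3 / 5) ^ F.card)) =
    2 ^ (U \ F).card * 2 ^ F.card * (5 ^ ((n : ℝ) / 100) * (3 / 5) ^ F.card) := by ring
  rw [this]
  gcongr

theorem four_UU3 (l : V → Fin 3) : 4 * (UU l).card ≤ Fintype.card V ^ 2 := by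
  rw [card_UU3]
  have : (LL l 1).card ≤ Fintype.card V := card_le_univ _
  obtain ⟨b, hb⟩ := Nat.exists_eq_add_of_le this
  rw [hb, Nat.add_sub_cancel_left]
  zify
  nlinarith [sq_nonneg (((LL l 1).card : ℤ) - b)]

theorem notnice_one (l : V → Fin 3) :
    ((univ.filter (fun E : Finset (V × V) => Lev E 3 l ∧ ¬ Nice E l)).card : ℝ) ≤
      2 ^ ((Fintype.card V : ℝ) ^ 2 / 4) * 5 ^ ((Fintype.card V : ℝ) / 100) *
      ((3 / 5) ^ (LL l 1).card + Fintype.card V * ((3 / 5) ^ (LL l 0).card +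
        (3 / 5) ^ (LL l 2).card + (3 / 5) ^ (LL l 1).card)) := by
  set n := Fintype.card V with hn
  set U := UU l with hU
  have hq := pow_le_quarter (four_UU3 l)
  rw [← hn, ← hU] at hq
  have hcover : univ.filter (fun E : Finset (V × V) => Lev E 3 l ∧ ¬ Nice E l) ⊆
      (U.powerset.filter (fun _ => 100 * (LL l 1).card < n)) ∪
      univ.biUnion (fun v : V =>
        (U.powerset.filter (fun E => l v = 1 ∧ 100 * (E.filter (fun e => e.2 = v)).card < n)) ∪
        (U.powerset.filter (fun E => l v = 1 ∧ 100 * (E.filter (fun e => e.1 = v)).card < n)) ∪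
        (U.powerset.filter (fun E => l v ≠ 1 ∧
          100 * (E.filter (fun e => e.1 = v ∨ e.2 = v)).card < n))) := by
    intro E hE
    simp only [mem_filter, mem_univ, true_and] at hE
    obtain ⟨hl, hN⟩ := hE
    have hEU := lev_iff.1 hl
    by_contra hcon
    simp only [mem_union, mem_biUnion, mem_filter, mem_powerset, mem_univ, true_and, not_or,
      not_and, not_exists, not_lt] at hcon
    obtain ⟨c1, c2⟩ := hcon
    exact hN ⟨hl, c1 hEU, fun v => (c2 v).1.1 hEU, fun v => (c2 v).1.2 hEU,
      fun v => (c2 v).2 hEU⟩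
  have h1 := (card_le_card hcover).trans (card_union_le _ _)
  have key : ∀ (χ : Prop) (φ : V × V → Prop) (p : ℕ), (χ → p ≤ (U.filter φ).card) →
      ((U.powerset.filter (fun E => χ ∧ 100 * (E.filter φ).card < n)).card : ℝ) ≤
        2 ^ ((n : ℝ) ^ 2 / 4) * (5 ^ ((n : ℝ) / 100) * (3 / 5) ^ p) := by
    intro χ φ p h
    by_cases hχ : χ
    · simp only [hχ, true_and]
      refine (cnt1 U φ p n (h hχ)).trans ?_
      gcongr
    · simp only [hχ, false_and, filter_false, card_empty, Nat.cast_zero]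
      positivity
  have k0 : ((U.powerset.filter (fun _ => 100 * (LL l 1).card < n)).card : ℝ) ≤
        2 ^ ((n : ℝ) ^ 2 / 4) * (5 ^ ((n : ℝ) / 100) * (3 / 5) ^ (LL l 1).card) := by
    by_cases hχ : 100 * (LL l 1).card < n
    · rw [filter_true_of_mem (fun _ _ => hχ), card_powerset]
      push_cast
      have : (1 : ℝ) ≤ 5 ^ ((n : ℝ) / 100) * (3 / 5) ^ (LL l 1).card := by
        calc (1 : ℝ) ≤ 5 ^ ((n : ℝ) / 100) * (1 / 5) ^ (LL l 1).card := by
              rw [one_div, inv_pow, ← Real.rpow_natCast, ← Real.rpow_neg (by norm_num),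
                ← Real.rpow_add (by norm_num)]
              apply Real.one_le_rpow (by norm_num)
              have : (100 * (LL l 1).card : ℝ) < n := by exact_mod_cast hχ
              linarith
          _ ≤ _ := by gcongr; norm_num
      calc (2 : ℝ) ^ U.card ≤ 2 ^ ((n : ℝ) ^ 2 / 4) * 1 := by rw [mul_one]; exact hq
        _ ≤ _ := by gcongr
    · rw [filter_false_of_mem (fun _ _ => hχ)]
      simp only [card_empty, Nat.cast_zero]
      positivity
  have hv : ∀ v : V, ((((U.powerset.filter (fun E => l v = 1 ∧ 100 * (E.filter (fun e => e.2 = v)).card < n)) ∪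
        (U.powerset.filter (fun E => l v = 1 ∧ 100 * (E.filter (fun e => e.1 = v)).card < n)) ∪
        (U.powerset.filter (fun E => l v ≠ 1 ∧
          100 * (E.filter (fun e => e.1 = v ∨ e.2 = v)).card < n))).card : ℕ) : ℝ) ≤
        2 ^ ((n : ℝ) ^ 2 / 4) * 5 ^ ((n : ℝ) / 100) * ((3 / 5) ^ (LL l 0).card +
        (3 / 5) ^ (LL l 2).card + (3 / 5) ^ (LL l 1).card) := by
    intro v
    have a1 := key (l v = 1) (fun e => e.2 = v) (LL l 0).card (by
      intro hv
      refine card_le_card_of_injOn (fun x => (x, v)) ?_ (by intro x _ y _ h; simpa using h)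
      intro x hx
      have hx := mem_LL.1 hx
      simp [hU, mem_UU, hx, hv])
    have a2 := key (l v = 1) (fun e => e.1 = v) (LL l 2).card (by
      intro hv
      refine card_le_card_of_injOn (fun x => (v, x)) ?_ (by intro x _ y _ h; simpa using h)
      intro x hx
      have hx := mem_LL.1 hx
      simp [hU, mem_UU, hx, hv])
    have a3 := key (l v ≠ 1) (fun e => e.1 = v ∨ e.2 = v) (LL l 1).card (by
      intro hv
      have : l v = 0 ∨ l v = 2 := by
        generalize l v = a at hv
        fin_cases a <;> simp_all
      rcases this with hv' | hv'
      · refine card_le_card_of_injOn (fun x => (v, x)) ?_ (by intro x _ y _ h; simpa using h)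
        intro x hx
        have hx := mem_LL.1 hx
        simp [hU, mem_UU, hx, hv']
      · refine card_le_card_of_injOn (fun x => (x, v)) ?_ (by intro x _ y _ h; simpa using h)
        intro x hx
        have hx := mem_LL.1 hx
        simp [hU, mem_UU, hx, hv'])
    have b := (card_union_le ((U.powerset.filter (fun E => l v = 1 ∧ 100 * (E.filter (fun e => e.2 = v)).card < n)) ∪
        (U.powerset.filter (fun E => l v = 1 ∧ 100 * (E.filter (fun e => e.1 = v)).card < n)))
        (U.powerset.filter (fun E => l v ≠ 1 ∧
          100 * (E.filter (fun e => e.1 = v ∨ e.2 = v)).card < n))).trans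
          (Nat.add_le_add_right (card_union_le _ _) _)
    have b' := (Nat.cast_le (α := ℝ)).2 b
    push_cast at b'
    refine b'.trans ?_
    rw [mul_add, mul_add]
    refine add_le_add (add_le_add ?_ ?_) ?_
    · rw [mul_assoc]; refine le_trans (le_of_eq ?_) a1; congr!
    · rw [mul_assoc]; refine le_trans (le_of_eq ?_) a2; congr!
    · rw [mul_assoc]; refine le_trans (le_of_eq ?_) a3; congr!
  have h2 := h1.trans (Nat.add_le_add_left card_biUnion_le _)
  have h3 := (Nat.cast_le (α := ℝ)).2 h2
  push_cast at h3
  refine h3.trans ?_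
  have h4 := sum_le_sum (fun v (_ : v ∈ (univ : Finset V)) => hv v)
  rw [sum_const, card_univ, nsmul_eq_mul, ← hn] at h4
  rw [mul_add]
  refine (add_le_add k0 h4).trans (le_of_eq ?_)
  ring

theorem notnice_count : (∑ l : V → Fin 3,
      ((univ.filter (fun E : Finset (V × V) => Lev E 3 l ∧ ¬ Nice E l)).card : ℝ)) ≤
      (3 * Fintype.card V + 1) * (27 / 10) ^ Fintype.card V *
        2 ^ ((Fintype.card V : ℝ) ^ 2 / 4) := by
  refine (sum_le_sum fun l _ => notnice_one l).trans ?_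
  have w0 := weight_sum (V := V) (m := 3) ![3 / 5, 1, 1]
  have w1 := weight_sum (V := V) (m := 3) ![1, 3 / 5, 1]
  have w2 := weight_sum (V := V) (m := 3) ![1, 1, 3 / 5]
  simp only [Fin.prod_univ_three, Fin.sum_univ_three, Matrix.cons_val_zero, Matrix.cons_val_one,
    Matrix.cons_val, one_pow, mul_one, one_mul] at w0 w1 w2
  rw [← mul_sum, sum_add_distrib, ← mul_sum, sum_add_distrib, sum_add_distrib, w0, w1, w2]
  have h5 : (5 : ℝ) ^ ((Fintype.card V : ℝ) / 100) ≤ (102 / 100) ^ Fintype.card V := by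
    have h : (5 : ℝ) ^ (1 / 100 : ℝ) ≤ 102 / 100 := by
      rw [Real.rpow_le_iff_le_log (by norm_num) (by norm_num)]
      have : Real.log 5 ≤ Real.log ((102 / 100) ^ 100) := Real.log_le_log (by norm_num) (by norm_num)
      rw [Real.log_pow] at this
      push_cast at this
      linarith
    calc (5 : ℝ) ^ ((Fintype.card V : ℝ) / 100) = (5 ^ (1 / 100 : ℝ)) ^ Fintype.card V := by
          rw [← Real.rpow_natCast, ← Real.rpow_mul (by norm_num)]
          congr 1; ring
      _ ≤ _ := by gcongr
  have e0 : ((3 / 5 + 1 + 1 : ℝ)) = 26 / 10 := by norm_num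
  have e1 : ((1 + 3 / 5 + 1 : ℝ)) = 26 / 10 := by norm_num
  have e2 : ((1 + 1 + 3 / 5 : ℝ)) = 26 / 10 := by norm_num
  rw [e0, e1, e2]
  have e3 : (5 : ℝ) ^ ((Fintype.card V : ℝ) / 100) * (26 / 10) ^ Fintype.card V ≤
      (27 / 10) ^ Fintype.card V := by
    calc _ ≤ (102 / 100 : ℝ) ^ Fintype.card V * (26 / 10) ^ Fintype.card V := by gcongr
      _ = (102 / 100 * (26 / 10)) ^ Fintype.card V := by rw [mul_pow]
      _ ≤ _ := by gcongr; norm_num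
  calc _ = (3 * Fintype.card V + 1) * ((5 : ℝ) ^ ((Fintype.card V : ℝ) / 100) * (26 / 10) ^ Fintype.card V) *
        2 ^ ((Fintype.card V : ℝ) ^ 2 / 4) := by ring
    _ ≤ _ := by gcongr

/-- The main term. -/
noncomputable def WW (n : ℕ) : ℝ := 2 ^ ((n : ℝ) + ((n : ℝ) + 1) ^ 2 / 4)

theorem total_upper : (∑ l : V → Fin 3,
      ((univ.filter (fun E : Finset (V × V) => Lev E 3 l)).card : ℝ)) ≤ WW (Fintype.card V) := by
  have w := weight_sum (V := V) (m := 3) ![1 / 2, 1, 1 / 2]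
  simp only [Fin.prod_univ_three, Fin.sum_univ_three, Matrix.cons_val_zero, Matrix.cons_val_one,
    Matrix.cons_val, one_pow, mul_one] at w
  have : WW (Fintype.card V) = 2 ^ (((Fintype.card V : ℝ) + 1) ^ 2 / 4) *
      (1 / 2 + 1 + 1 / 2) ^ Fintype.card V := by
    unfold WW
    rw [Real.rpow_add (by norm_num), mul_comm, Real.rpow_natCast]
    norm_num
  rw [this, ← w, mul_sum]
  refine sum_le_sum fun l _ => ?_
  rw [lev_filter, card_powerset, card_UU3]
  have hs := sum_LL l
  rw [Fin.sum_univ_three] at hs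
  rw [← hs, show (LL l 0).card + (LL l 1).card + (LL l 2).card - (LL l 1).card =
      (LL l 0).card + (LL l 2).card by omega]
  push_cast
  rw [← pow_add, one_div, inv_pow, ← div_eq_mul_inv, le_div_iff₀ (by positivity), ← pow_add,
    ← Real.rpow_natCast]
  refine Real.rpow_le_rpow_of_exponent_le (by norm_num) ?_
  push_cast
  nlinarith [sq_nonneg (((LL l 0).card : ℝ) + (LL l 2).card - 1 - (LL l 1).card)]

theorem total_lower : WW (Fintype.card V) ≤ 2 * (Fintype.card V + 1) * (∑ l : V → Fin 3,
      ((univ.filter (fun E : Finset (V × V) => Lev E 3 l)).card : ℝ)) := by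
  set n := Fintype.card V with hn
  set m := n / 2 with hm
  have h1 : n.choose m * 2 ^ (n - m) ≤
      (univ.filter (fun l : V → Fin 3 => (LL l 1).card = m)).card := by
    have hc : ((powersetCard m (univ : Finset V)).sigma (fun S => Sᶜ.powerset)).card =
        n.choose m * 2 ^ (n - m) := by
      rw [card_sigma]
      rw [sum_congr rfl (g := fun _ => 2 ^ (n - m))]
      · rw [sum_const, card_powersetCard, card_univ, smul_eq_mul]
      · intro S hS
        rw [card_powerset, card_compl, (mem_powersetCard.1 hS).2]
    rw [← hc]
    refine card_le_card_of_injOn (fun st v => if v ∈ st.1 then 1 else if v ∈ st.2 then 0 else 2)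
      ?_ ?_
    · rintro ⟨S, T⟩ hST
      rw [mem_coe, mem_sigma, mem_powersetCard, mem_powerset] at hST
      simp only [coe_filter, mem_univ, true_and, Set.mem_ofPred_eq]
      rw [← hST.1.2]
      congr 1
      ext v
      rw [mem_LL]
      by_cases hv : v ∈ S
      · simp [hv]
      · by_cases hv' : v ∈ T <;> simp [hv, hv']
    · rintro ⟨S, T⟩ hST ⟨S', T'⟩ hST' heq
      rw [mem_coe, mem_sigma, mem_powersetCard, mem_powerset] at hST hST'
      have hv : ∀ v, (v ∈ S ↔ v ∈ S') ∧ (v ∈ T ↔ v ∈ T') := by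
        intro v
        have h := congrFun heq v
        have d1 : v ∈ T → v ∉ S := fun h => mem_compl.1 (hST.2 h)
        have d2 : v ∈ T' → v ∉ S' := fun h => mem_compl.1 (hST'.2 h)
        dsimp only at h d1 d2
        by_cases a : v ∈ S <;> by_cases b : v ∈ S' <;> by_cases c : v ∈ T <;>
          by_cases d : v ∈ T' <;> simp_all
      have e1 : S = S' := ext fun v => (hv v).1
      have e2 : T = T' := ext fun v => (hv v).2
      rw [e1, e2]
  have h2 : 2 ^ n ≤ (n + 1) * n.choose m := by
    rw [← Nat.sum_range_choose]
    refine (sum_le_card_nsmul _ _ _ (fun i _ => Nat.choose_le_middle i n)).trans ?_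
    simp [hm]
  have h3 : ((n.choose m * 2 ^ (n - m) * 2 ^ (m * (n - m)) : ℕ) : ℝ) ≤ ∑ l : V → Fin 3,
      ((univ.filter (fun E : Finset (V × V) => Lev E 3 l)).card : ℝ) := by
    calc ((n.choose m * 2 ^ (n - m) * 2 ^ (m * (n - m)) : ℕ) : ℝ)
        ≤ (((univ.filter (fun l : V → Fin 3 => (LL l 1).card = m)).card *
          2 ^ (m * (n - m)) : ℕ) : ℝ) := by
          exact_mod_cast Nat.mul_le_mul_right _ h1
      _ = ∑ l ∈ univ.filter (fun l : V → Fin 3 => (LL l 1).card = m),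
          ((univ.filter (fun E : Finset (V × V) => Lev E 3 l)).card : ℝ) := by
          rw [sum_congr rfl (g := fun _ => (2 : ℝ) ^ (m * (n - m)))]
          · rw [sum_const, nsmul_eq_mul]; push_cast; ring
          · intro l hl
            rw [lev_filter, card_powerset, card_UU3, (mem_filter.1 hl).2]
            push_cast; rfl
      _ ≤ _ := sum_le_sum_of_subset_of_nonneg (filter_subset _ _) (fun _ _ _ => by positivity)
  have h4 : WW n ≤ 2 * 2 ^ n * 2 ^ (n - m) * 2 ^ (m * (n - m)) := by
    have : (2 : ℝ) * 2 ^ n * 2 ^ (n - m) * 2 ^ (m * (n - m)) = 2 ^ (1 + n + (n - m) + m * (n - m)) := by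
      rw [pow_add, pow_add, pow_add]; ring
    rw [this, ← Real.rpow_natCast]
    unfold WW
    refine Real.rpow_le_rpow_of_exponent_le (by norm_num) ?_
    rcases Nat.even_or_odd' n with ⟨k, hk | hk⟩
    · have e : m = k := by omega
      rw [e, hk, show 2 * k - k = k by omega]
      push_cast
      nlinarith
    · have e : m = k := by omega
      rw [e, hk, show 2 * k + 1 - k = k + 1 by omega]
      push_cast
      nlinarith
  have h5 : (2 : ℝ) ^ n ≤ (n + 1) * n.choose m := by exact_mod_cast h2
  calc WW n ≤ 2 * 2 ^ n * 2 ^ (n - m) * 2 ^ (m * (n - m)) := h4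
    _ ≤ 2 * ((n + 1) * n.choose m) * 2 ^ (n - m) * 2 ^ (m * (n - m)) := by gcongr
    _ = 2 * (n + 1) * ((n.choose m * 2 ^ (n - m) * 2 ^ (m * (n - m)) : ℕ) : ℝ) := by
        push_cast; ring
    _ ≤ _ := by gcongr

theorem nice_char {E : Finset (V × V)} {l : V → Fin 3} (h : Nice E l) (hn : 0 < Fintype.card V)
    (v : V) : l v = if ∃ x, (x, v) ∈ E then (if ∃ y, (v, y) ∈ E then 1 else 2) else 0 := by
  have i1 : ∀ x, (x, v) ∈ E → (l v : ℕ) = l x + 1 := fun x hx => h.lev x v hx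
  have o1 : ∀ y, (v, y) ∈ E → (l y : ℕ) = l v + 1 := fun y hy => h.lev v y hy
  by_cases hv : l v = 1
  · have a1 : (E.filter (fun e => e.2 = v)).Nonempty := by
      rw [← card_pos]; have := h.inn v hv; omega
    have a2 : (E.filter (fun e => e.1 = v)).Nonempty := by
      rw [← card_pos]; have := h.out v hv; omega
    obtain ⟨⟨x, y⟩, hxy⟩ := a1
    obtain ⟨⟨x', y'⟩, hxy'⟩ := a2
    rw [mem_filter] at hxy hxy'
    obtain ⟨hxy, rfl⟩ := hxy
    obtain ⟨hxy', h'⟩ := hxy'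
    dsimp only at h' hv
    subst h'
    rw [if_pos ⟨x, hxy⟩, if_pos ⟨y', hxy'⟩, hv]
  · have a1 : (E.filter (fun e => e.1 = v ∨ e.2 = v)).Nonempty := by
      rw [← card_pos]; have := h.deg v hv; omega
    obtain ⟨⟨x, y⟩, hxy⟩ := a1
    rw [mem_filter] at hxy
    obtain ⟨hxy, h'⟩ := hxy
    dsimp only at h'
    have : l v = 0 ∨ l v = 2 := by
      generalize l v = a at hv
      fin_cases a <;> simp_all
    rcases this with h0 | h2
    · rw [if_neg, h0]
      rintro ⟨x, hx⟩
      have := i1 x hx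
      rw [h0] at this
      simp at this
    · have no : ¬ ∃ y, (v, y) ∈ E := by
        rintro ⟨y, hy⟩
        have := o1 y hy
        rw [h2] at this
        have hlt := (l y).2
        simp at this
        omega
      have yes : ∃ x, (x, v) ∈ E := by
        rcases h' with h' | h'
        · subst h'; exact absurd ⟨y, hxy⟩ no
        · subst h'; exact ⟨x, hxy⟩
      rw [if_pos yes, if_neg no, h2]

theorem nice_count (hn : 0 < Fintype.card V) :
    (∑ l : V → Fin 3, ((univ.filter (fun E : Finset (V × V) => Lev E 3 l)).card : ℝ)) ≤
    ((univ.filter (fun E : Finset (V × V) => ∃ l, Nice E l)).card : ℝ) +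
    ∑ l : V → Fin 3,
      ((univ.filter (fun E : Finset (V × V) => Lev E 3 l ∧ ¬ Nice E l)).card : ℝ) := by
  have h1 : (univ.filter (fun E : Finset (V × V) => ∃ l, Nice E l)) =
      univ.biUnion (fun l => univ.filter (fun E => Nice E l)) := by
    ext E; simp
  rw [h1, card_biUnion]
  · push_cast
    rw [← sum_add_distrib]
    refine sum_le_sum fun l _ => ?_
    have : (univ.filter (fun E : Finset (V × V) => Lev E 3 l)) ⊆
        univ.filter (fun E => Nice E l) ∪ univ.filter (fun E => Lev E 3 l ∧ ¬ Nice E l) := by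
      intro E hE
      simp only [mem_union, mem_filter, mem_univ, true_and] at hE ⊢
      tauto
    exact_mod_cast (card_le_card this).trans (card_union_le _ _)
  · intro l _ l' _ hne
    show Disjoint _ _
    rw [disjoint_left]
    intro E hE hE'
    simp only [mem_filter, mem_univ, true_and] at hE hE'
    exact hne (funext fun v => (nice_char hE hn v).trans (nice_char hE' hn v).symm)

end
end KR

namespace KR
open Finset Filter Topology
open scoped Classical
set_option linter.unusedSectionVars false

/-- Running maximum of the normalised counts. -/
noncomputable def GG : ℕ → ℝ
  | 0 => 0
  | n + 1 => max (GG n) (fcount n / WW n)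

theorem WW_pos (n : ℕ) : 0 < WW n := by unfold WW; positivity

theorem GG_mono : Monotone GG := monotone_nat_of_le_succ fun n => le_max_left _ _

theorem GG_nonneg (n : ℕ) : 0 ≤ GG n := GG_mono (Nat.zero_le n)

theorem le_GG {m n : ℕ} (h : m < n) : (fcount m : ℝ) / WW m ≤ GG n :=
  (le_max_right _ _).trans (GG_mono (Nat.succ_le_of_lt h))

def KSeq (u : ℕ → ℝ) : Prop := (∀ n, 0 ≤ u n) ∧ Tendsto (fun n : ℕ => ((n : ℝ) + 1) * u n) atTop (𝓝 0)

def RB (c : ℕ → ℝ) : Prop :=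
  ∃ u, KSeq u ∧ ∀ᶠ n in atTop, c n ≤ u n * WW n * (1 + GG n)

theorem KSeq.add {u v : ℕ → ℝ} (hu : KSeq u) (hv : KSeq v) : KSeq (fun n => u n + v n) := by
  refine ⟨fun n => add_nonneg (hu.1 n) (hv.1 n), ?_⟩
  have := hu.2.add hv.2
  simp only [add_zero] at this
  refine this.congr fun n => by ring

theorem RB.add {c d : ℕ → ℝ} (hc : RB c) (hd : RB d) : RB (fun n => c n + d n) := by
  obtain ⟨u, hu, h1⟩ := hc
  obtain ⟨v, hv, h2⟩ := hd
  refine ⟨_, hu.add hv, ?_⟩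
  filter_upwards [h1, h2] with n a b
  calc _ ≤ _ := add_le_add a b
    _ = _ := by ring

theorem RB.mono {c d : ℕ → ℝ} (hc : RB c) (h : ∀ᶠ n in atTop, d n ≤ c n) : RB d := by
  obtain ⟨u, hu, h1⟩ := hc
  exact ⟨u, hu, by filter_upwards [h1, h] with n a b using b.trans a⟩

theorem KSeq_geom (C : ℝ) (D : ℕ) (r : ℝ) (hC : 0 ≤ C) (hr : 0 < r) (hr1 : r < 1) :
    KSeq (fun n => C * (n : ℝ) ^ D * r ^ n) := by
  refine ⟨fun n => by positivity, ?_⟩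
  have h1 := tendsto_pow_const_mul_const_pow_of_lt_one (D + 1) hr.le hr1
  have h2 := tendsto_pow_const_mul_const_pow_of_lt_one D hr.le hr1
  have := (h1.add h2).const_mul C
  simp only [add_zero, mul_zero] at this
  refine this.congr fun n => by ring

theorem RB_CB {k : ℕ} (hk : 0 < k) {cnt : ℕ → ℕ} (h : CB k cnt) : RB (fun n => (cnt n : ℝ)) := by
  obtain ⟨C, D, r, hC, hr, hr1, n0, h⟩ := h
  refine ⟨_, KSeq_geom (C * 2 ^ ((k : ℝ) ^ 2 / 4)) D r (by positivity) hr hr1, ?_⟩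
  filter_upwards [eventually_ge_atTop n0, eventually_ge_atTop k] with n h1 h2
  refine (h n h1).trans ?_
  have hW : (2 : ℝ) ^ ((k * n : ℝ) / 2) * WW (n - k) ≤ 2 ^ ((k : ℝ) ^ 2 / 4) * WW n := by
    unfold WW
    rw [← Real.rpow_add (by norm_num), ← Real.rpow_add (by norm_num)]
    refine Real.rpow_le_rpow_of_exponent_le (by norm_num) ?_
    rw [Nat.cast_sub h2]
    have : (0 : ℝ) ≤ k := by positivity
    nlinarith
  have hg := le_GG (m := n - k) (n := n) (by omega)
  rw [div_le_iff₀ (WW_pos _)] at hg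
  have hG := GG_nonneg n
  calc C * (n : ℝ) ^ D * r ^ n * 2 ^ ((k * n : ℝ) / 2) * fcount (n - k)
      ≤ C * (n : ℝ) ^ D * r ^ n * 2 ^ ((k * n : ℝ) / 2) * (GG n * WW (n - k)) := by gcongr
    _ = C * (n : ℝ) ^ D * r ^ n * (2 ^ ((k * n : ℝ) / 2) * WW (n - k)) * GG n := by ring
    _ ≤ C * (n : ℝ) ^ D * r ^ n * (2 ^ ((k : ℝ) ^ 2 / 4) * WW n) * (1 + GG n) := by
        have := WW_pos n
        gcongr
        linarith
    _ = _ := by ring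

theorem WW_ge (n : ℕ) : (28 / 10 : ℝ) ^ n * 2 ^ ((n : ℝ) ^ 2 / 4) ≤ WW n := by
  have h : (28 / 10 : ℝ) ≤ 2 ^ (3 / 2 : ℝ) := by
    have : (28 / 10 : ℝ) = ((28 / 10) ^ (2 : ℝ)) ^ (1 / 2 : ℝ) := by
      rw [← Real.rpow_mul (by norm_num)]; norm_num
    rw [this, show (3 / 2 : ℝ) = 3 * (1 / 2) by norm_num, Real.rpow_mul (by norm_num)]
    refine Real.rpow_le_rpow (by positivity) ?_ (by norm_num)
    norm_num
  calc _ ≤ ((2 : ℝ) ^ (3 / 2 : ℝ)) ^ n * 2 ^ ((n : ℝ) ^ 2 / 4) := by gcongr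
    _ ≤ _ := by
      unfold WW
      rw [← Real.rpow_natCast, ← Real.rpow_mul (by norm_num), ← Real.rpow_add (by norm_num)]
      refine Real.rpow_le_rpow_of_exponent_le (by norm_num) ?_
      nlinarith

noncomputable def err (n : ℕ) : ℝ := (3 * n + 1) * (27 / 10) ^ n * 2 ^ ((n : ℝ) ^ 2 / 4)

theorem err_le : ∃ u, KSeq u ∧ ∀ᶠ n in atTop, err n ≤ u n * WW n := by
  refine ⟨_, KSeq_geom 4 1 (27 / 28) (by norm_num) (by norm_num) (by norm_num), ?_⟩
  filter_upwards [eventually_ge_atTop 1] with n hn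
  unfold err
  have hn : (1 : ℝ) ≤ n := by exact_mod_cast hn
  calc _ ≤ (4 * n : ℝ) * (27 / 10) ^ n * 2 ^ ((n : ℝ) ^ 2 / 4) := by gcongr; linarith
    _ = (4 * n : ℝ) * (27 / 28 * (28 / 10)) ^ n * 2 ^ ((n : ℝ) ^ 2 / 4) := by norm_num
    _ = (4 * n : ℝ) * (27 / 28) ^ n * ((28 / 10) ^ n * 2 ^ ((n : ℝ) ^ 2 / 4)) := by
        rw [mul_pow]; ring
    _ ≤ (4 * n : ℝ) * (27 / 28) ^ n * WW n := by gcongr; exact WW_ge n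
    _ = _ := by ring

theorem RB_err : RB err := by
  obtain ⟨u, hu, h⟩ := err_le
  refine ⟨u, hu, ?_⟩
  filter_upwards [h] with n h
  refine h.trans (le_mul_of_one_le_right (mul_nonneg (hu.1 n) (WW_pos n).le) ?_)
  linarith [GG_nonneg n]

/-- counts of the exceptional digraphs -/
noncomputable def exc (q n : ℕ) : Finset (Finset (Fin n × Fin n)) :=
  (univ.filter (fun E : Finset (Fin n × Fin n) => Cls E ∧ ¬ MinDeg E)) ∪
  (univ.filter (fun E : Finset (Fin n × Fin n) => Cls E ∧ MinDeg E ∧ ¬ GA E q)) ∪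
  (univ.filter (fun E : Finset (Fin n × Fin n) => Cls E ∧ MinDeg E ∧ ¬ GB E q)) ∪
  (univ.filter (fun E : Finset (Fin n × Fin n) => Cls E ∧ MinDeg E ∧ GA E q ∧ ¬ GJ E q 2)) ∪
  (univ.filter (fun E : Finset (Fin n × Fin n) => Cls E ∧ MinDeg E ∧ GA E q ∧ ¬ GJ E q 3)) ∪
  (univ.filter (fun E : Finset (Fin n × Fin n) =>
      ∃ l : Fin n → Fin 4, Lev E 4 l ∧ (∃ v, l v = 0) ∧ ∃ v, l v = 3))

theorem RB_exc (q : ℕ) (hq : q = 40000) : RB (fun n => ((exc q n).card : ℝ)) := by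
  have h1 := RB_CB one_pos CB_MinDeg
  have h2 := RB_CB (by omega) (CB_GA q hq)
  have h3 := RB_CB one_pos (CB_GB q)
  have h4 := RB_CB two_pos (CB_GJ q 2 two_pos (by norm_num))
  have h5 := RB_CB three_pos (CB_GJ q 3 three_pos (by norm_num))
  have h6 : RB (fun n => ((univ.filter (fun E : Finset (Fin n × Fin n) =>
      ∃ l : Fin n → Fin 4, Lev E 4 l ∧ (∃ v, l v = 0) ∧ ∃ v, l v = 3)).card : ℝ)) := by
    refine RB_err.mono ?_
    filter_upwards [eventually_ge_atTop 12] with n hn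
    have := four_count (V := Fin n)
    rw [Fintype.card_fin] at this
    refine (le_trans (le_of_eq (by congr!)) this).trans ?_
    unfold err
    have hn : (12 : ℝ) ≤ n := by exact_mod_cast hn
    gcongr
    · linarith
    · norm_num
  refine (((((h1.add h2).add h3).add h4).add h5).add h6).mono (Eventually.of_forall fun n => ?_)
  have : (exc q n).card ≤ _ := (card_union_le _ _).trans (Nat.add_le_add_right
    ((card_union_le _ _).trans (Nat.add_le_add_right
    ((card_union_le _ _).trans (Nat.add_le_add_right
    ((card_union_le _ _).trans (Nat.add_le_add_right (card_union_le _ _) _)) _)) _)) _)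
  exact_mod_cast this

theorem exc_spec {q : ℕ} (hq : 1 ≤ q) {n : ℕ} (hn : 64 * (2 * q + 4) ≤ n)
    {E : Finset (Fin n × Fin n)} (hE : Cls E) (h : E ∉ exc q n) :
    ∃ l : Fin n → Fin 3, Lev E 3 l := by
  simp only [exc, mem_union, mem_filter, mem_univ, true_and, not_or, hE] at h
  obtain ⟨⟨⟨⟨⟨a1, a2⟩, a3⟩, a4⟩, a5⟩, a6⟩ := h
  have b1 : MinDeg E := by tauto
  have b2 : GA E q := by tauto
  rcases struct hE b1 hq b2 (by tauto) (by tauto) (by tauto) (by rwa [Fintype.card_fin]) with h | h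
  · exact h
  · exact absurd h a6

noncomputable def Goods (n : ℕ) : Finset (Finset (Fin n × Fin n)) :=
  univ.filter (fun E => ∃ l, Nice E l)

noncomputable def Bads (n : ℕ) : Finset (Finset (Fin n × Fin n)) :=
  univ.filter (fun E => Cls E ∧ ¬ ∃ l, Nice E l)

theorem RB_Bads : RB (fun n => ((Bads n).card : ℝ)) := by
  obtain ⟨q, hq⟩ : ∃ q : ℕ, q = 40000 := ⟨_, rfl⟩
  refine ((RB_exc q hq).add RB_err).mono ?_
  filter_upwards [eventually_ge_atTop (64 * (2 * q + 4))] with n hn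
  have h1 : Bads n ⊆ exc q n ∪ univ.biUnion (fun l : Fin n → Fin 3 =>
      univ.filter (fun E : Finset (Fin n × Fin n) => Lev E 3 l ∧ ¬ Nice E l)) := by
    intro E hE
    obtain ⟨hE, hN⟩ := (mem_filter.1 hE).2
    by_cases h : E ∈ exc q n
    · exact mem_union_left _ h
    · obtain ⟨l, hl⟩ := exc_spec (by omega) hn hE h
      refine mem_union_right _ ?_
      simp only [mem_biUnion, mem_filter, mem_univ, true_and]
      exact ⟨l, hl, fun h => hN ⟨l, h⟩⟩
  have h2 := (card_le_card h1).trans ((card_union_le _ _).trans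
    (Nat.add_le_add_left card_biUnion_le _))
  have h3 := (Nat.cast_le (α := ℝ)).2 h2
  push_cast at h3
  refine h3.trans (add_le_add le_rfl ?_)
  have := notnice_count (V := Fin n)
  rw [Fintype.card_fin] at this
  refine le_trans (le_of_eq ?_) this
  congr!

theorem fcount_le : ∃ u, KSeq u ∧ ∀ᶠ n in atTop,
    (fcount n : ℝ) ≤ WW n + u n * WW n * (1 + GG n) := by
  obtain ⟨q, hq⟩ : ∃ q : ℕ, q = 40000 := ⟨_, rfl⟩
  obtain ⟨u, hu, h⟩ := RB_exc q hq
  refine ⟨u, hu, ?_⟩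
  filter_upwards [eventually_ge_atTop (64 * (2 * q + 4)), h] with n hn h
  have h1 : (univ.filter (fun E : Finset (Fin n × Fin n) => Cls E)) ⊆
      exc q n ∪ univ.biUnion (fun l : Fin n → Fin 3 =>
      univ.filter (fun E : Finset (Fin n × Fin n) => Lev E 3 l)) := by
    intro E hE
    have hE := (mem_filter.1 hE).2
    by_cases h : E ∈ exc q n
    · exact mem_union_left _ h
    · obtain ⟨l, hl⟩ := exc_spec (by omega) hn hE h
      refine mem_union_right _ ?_
      simp only [mem_biUnion, mem_filter, mem_univ, true_and]
      exact ⟨l, hl⟩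
  have h2 := (card_le_card h1).trans ((card_union_le _ _).trans
    (Nat.add_le_add_left card_biUnion_le _))
  have h3 := (Nat.cast_le (α := ℝ)).2 h2
  push_cast at h3
  have := total_upper (V := Fin n)
  rw [Fintype.card_fin] at this
  unfold fcount
  have h4 := h3.trans (add_le_add h (le_trans (le_of_eq (by congr!)) this))
  linarith

theorem KSeq.small {u : ℕ → ℝ} (hu : KSeq u) {ε : ℝ} (hε : 0 < ε) :
    ∀ᶠ n : ℕ in atTop, ((n : ℝ) + 1) * u n < ε := hu.2.eventually_lt_const hε

theorem GG_bdd : ∃ M, ∀ n, GG n ≤ M := by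
  obtain ⟨u, hu, h⟩ := fcount_le
  obtain ⟨n0, hn0⟩ := eventually_atTop.1 (h.and (hu.small (ε := 1 / 2) (by norm_num)))
  refine ⟨max (GG n0) 3, fun n => ?_⟩
  rcases le_total n n0 with hn | hn
  · exact (GG_mono hn).trans (le_max_left _ _)
  induction n, hn using Nat.le_induction with
  | base => exact le_max_left _ _
  | succ n hn ih =>
    obtain ⟨h1, h2⟩ := hn0 n hn
    refine max_le ih ?_
    rw [div_le_iff₀ (WW_pos n)]
    refine h1.trans ?_
    have hu0 := hu.1 n
    have hu1 : u n ≤ 1 / 2 := by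
      have : (0 : ℝ) ≤ n := by positivity
      nlinarith
    have hM : (3 : ℝ) ≤ max (GG n0) 3 := le_max_right _ _
    have hG := GG_nonneg n
    have : 1 + u n * (1 + GG n) ≤ max (GG n0) 3 := by nlinarith
    calc _ = (1 + u n * (1 + GG n)) * WW n := by ring
      _ ≤ _ := by have := WW_pos n; gcongr

theorem bads_le : ∃ u, KSeq u ∧ ∀ᶠ n in atTop, ((Bads n).card : ℝ) ≤ u n * WW n := by
  obtain ⟨M, hM⟩ := GG_bdd
  obtain ⟨u, hu, h⟩ := RB_Bads
  have hM0 : 0 ≤ M := (GG_nonneg 0).trans (hM 0)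
  refine ⟨fun n => u n * (1 + M), ⟨fun n => mul_nonneg (hu.1 n) (by linarith), ?_⟩, ?_⟩
  · have := hu.2.mul_const (1 + M)
    rw [zero_mul] at this
    exact this.congr fun n => by ring
  · filter_upwards [h] with n h
    refine h.trans ?_
    have := hu.1 n
    have := WW_pos n
    calc _ ≤ u n * WW n * (1 + M) := by gcongr; exact hM n
      _ = _ := by ring

theorem goods_ge : ∀ᶠ n : ℕ in atTop, WW n ≤ 4 * ((n : ℝ) + 1) * (Goods n).card := by
  obtain ⟨u, hu, h⟩ := err_le
  filter_upwards [h, hu.small (ε := 1 / 4) (by norm_num), eventually_ge_atTop 1] with n h1 h2 h3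
  have a1 := nice_count (V := Fin n) (by rwa [Fintype.card_fin])
  have a2 := notnice_count (V := Fin n)
  have a3 := total_lower (V := Fin n)
  simp only [Fintype.card_fin] at a2 a3
  have a2' := a2.trans h1
  have hW := WW_pos n
  have hn : (0 : ℝ) ≤ n := by positivity
  have b1 : WW n ≤ 2 * ((n : ℝ) + 1) * ((Goods n).card + u n * WW n) := by
    refine a3.trans ?_
    gcongr
    refine (a1.trans (add_le_add le_rfl a2')).trans (le_of_eq ?_)
    unfold Goods
    congr!
  have : ((n : ℝ) + 1) * u n * WW n ≤ 1 / 4 * WW n := by gcongr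
  nlinarith

theorem ratio_tendsto : Tendsto (fun n => ((Bads n).card : ℝ) / (Goods n).card) atTop (𝓝 0) := by
  obtain ⟨u, hu, h⟩ := bads_le
  have h0 := hu.2.const_mul 4
  rw [mul_zero] at h0
  refine squeeze_zero' (Eventually.of_forall fun n => by positivity) ?_ h0
  filter_upwards [h, goods_ge] with n h1 h2
  have hW := WW_pos n
  have hG : (0 : ℝ) < (Goods n).card := by
    by_contra hc
    have : ((Goods n).card : ℝ) = 0 := le_antisymm (not_lt.1 hc) (by positivity)
    rw [this] at h2
    linarith
  rw [div_le_iff₀ hG]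
  have := hu.1 n
  calc _ ≤ _ := h1
    _ ≤ u n * (4 * ((n : ℝ) + 1) * (Goods n).card) := by gcongr
    _ = _ := by ring

theorem goods_pos : ∀ᶠ n in atTop, (0 : ℝ) < (Goods n).card := by
  filter_upwards [goods_ge] with n h2
  have hW := WW_pos n
  by_contra hc
  have : ((Goods n).card : ℝ) = 0 := le_antisymm (not_lt.1 hc) (by positivity)
  rw [this] at h2
  linarith

end KR

namespace KR
open Finset Filter Topology
open scoped Classical
set_option linter.unusedSectionVars false

section
variable {V : Type} [Fintype V]

/-- The Hasse digraph of a relation. -/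
noncomputable def hasse (r : V → V → Prop) : Finset (V × V) :=
  univ.filter (fun e => r e.1 e.2 ∧ e.1 ≠ e.2 ∧ ∀ z, r e.1 z → r z e.2 → z = e.1 ∨ z = e.2)

theorem mem_hasse {r : V → V → Prop} {x y : V} :
    (x, y) ∈ hasse r ↔ r x y ∧ x ≠ y ∧ ∀ z, r x z → r z y → z = x ∨ z = y := by
  simp [hasse]

theorem hasse_gen {r : V → V → Prop} (h : IsPartialOrder V r) (x y : V) :
    r x y ↔ Relation.ReflTransGen (fun a b => (a, b) ∈ hasse r) x y := by
  letI : PartialOrder V := relPO r h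
  letI : LocallyFiniteOrder V := Fintype.toLocallyFiniteOrder
  have hc : (fun a b : V => a ⋖ b) = (fun a b => (a, b) ∈ hasse r) := by
    funext a b
    apply propext
    rw [mem_hasse]
    constructor
    · intro hab
      refine ⟨hab.le, hab.ne, fun z h1 h2 => ?_⟩
      by_contra hc
      push Not at hc
      exact hab.2 (lt_of_le_of_ne h1 hc.1.symm) (lt_of_le_of_ne h2 hc.2)
    · rintro ⟨h1, h2, h3⟩
      refine ⟨lt_of_le_of_ne h1 h2, fun z hz1 hz2 => ?_⟩
      rcases h3 z hz1.le hz2.le with h | h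
      · exact hz1.ne h.symm
      · exact hz2.ne h
  rw [← hc]
  exact le_iff_reflTransGen_covBy (x := x) (y := y)

theorem hasse_inj {r s : V → V → Prop} (hr : IsPartialOrder V r) (hs : IsPartialOrder V s)
    (h : hasse r = hasse s) : r = s := by
  funext x y
  apply propext
  rw [hasse_gen hr, hasse_gen hs, h]

theorem hasse_cls {r : V → V → Prop} (h : IsPartialOrder V r) : Cls (hasse r) := by
  have tr := h.trans
  have an := h.antisymm
  have key : ∀ a b c, (a, b) ∈ hasse r → (b, c) ∈ hasse r → r a c → (a, c) ∈ hasse r → False := by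
    intro a b c h1 h2 _ h3
    rw [mem_hasse] at h1 h2 h3
    rcases h3.2.2 b h1.1 h2.1 with h | h
    · exact h1.2.1 h.symm
    · exact h2.2.1 h
  have cyc : ∀ a b c, (a, b) ∈ hasse r → (b, c) ∈ hasse r → r c a → False := by
    intro a b c h1 h2 h3
    rw [mem_hasse] at h1 h2
    exact h1.2.1 (an _ _ h1.1 (tr _ _ _ h2.1 h3))
  have le : ∀ {a b}, (a, b) ∈ hasse r → r a b := fun h => (mem_hasse.1 h).1
  refine ⟨?_, ?_, ?_⟩
  · intro x y hxy hyx
    exact (mem_hasse.1 hxy).2.1 (an _ _ (le hxy) (le hyx))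
  · intro x y z h1 h2 h3
    rcases h1 with h1 | h1 <;> rcases h2 with h2 | h2 <;> rcases h3 with h3 | h3
    · exact key x y z h1 h2 (le h3) h3
    · exact cyc x y z h1 h2 (le h3)
    · exact key x z y h3 h2 (le h1) h1
    · exact key z x y h3 h1 (le h2) h2
    · exact key y x z h1 h3 (le h2) h2
    · exact key y z x h2 h3 (le h1) h1
    · exact cyc z y x h2 h1 (le h3)
    · exact key z y x h2 h1 (le h3) h3
  · intro w x u y h1 h2 h3 h4
    have wx := mem_hasse.1 h1
    have xu := mem_hasse.1 h2
    rcases h3 with h3 | h3 <;> rcases h4 with h4 | h4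
    · exact ⟨h3, h4⟩
    · exfalso
      have wy := mem_hasse.1 h3
      rcases wy.2.2 x wx.1 (tr _ _ _ xu.1 (le h4)) with h | h
      · exact wx.2.1 h.symm
      · subst h; exact xu.2.1 (an _ _ xu.1 (le h4))
    · exfalso
      have yu := mem_hasse.1 h4
      rcases yu.2.2 x (tr _ _ _ (le h3) wx.1) xu.1 with h | h
      · subst h; exact wx.2.1 (an _ _ wx.1 (le h3))
      · exact xu.2.1 h
    · exact (cyc w x u h1 h2 (tr _ _ _ (le h4) (le h3))).elim

/-- Reconstruct the order. -/
def ofE (E : Finset (V × V)) (x y : V) : Prop :=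
  x = y ∨ (x, y) ∈ E ∨ ∃ z, (x, z) ∈ E ∧ (z, y) ∈ E

theorem ofE_lt {E : Finset (V × V)} {l : V → Fin 3} (h : Lev E 3 l) {x y : V} (hxy : ofE E x y) :
    x = y ∨ (l x : ℕ) < l y := by
  rcases hxy with hxy | hxy | ⟨z, h1, h2⟩
  · exact Or.inl hxy
  · have := h _ _ hxy; omega
  · have := h _ _ h1
    have := h _ _ h2
    omega

theorem ofE_po {E : Finset (V × V)} {l : V → Fin 3} (h : Lev E 3 l) : IsPartialOrder V (ofE E) where
  refl x := Or.inl rfl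
  trans x y z hxy hyz := by
    have lx := (l z).2
    rcases hxy with rfl | hxy | ⟨a, h1, h2⟩
    · exact hyz
    · rcases hyz with rfl | hyz | ⟨b, h3, h4⟩
      · exact Or.inr (Or.inl hxy)
      · exact Or.inr (Or.inr ⟨y, hxy, hyz⟩)
      · have := h _ _ hxy
        have := h _ _ h3
        have := h _ _ h4
        omega
    · have := h _ _ h1
      have := h _ _ h2
      rcases hyz with rfl | hyz | ⟨b, h3, h4⟩
      · exact Or.inr (Or.inr ⟨a, h1, h2⟩)
      · have := h _ _ hyz
        omega
      · have := h _ _ h3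
        have := h _ _ h4
        omega
  antisymm x y hxy hyx := by
    rcases ofE_lt h hxy with h1 | h1
    · exact h1
    · rcases ofE_lt h hyx with h2 | h2
      · exact h2.symm
      · omega

theorem hasse_ofE {E : Finset (V × V)} {l : V → Fin 3} (h : Lev E 3 l) : hasse (ofE E) = E := by
  ext ⟨x, y⟩
  rw [mem_hasse]
  constructor
  · rintro ⟨h1, h2, h3⟩
    rcases h1 with h1 | h1 | ⟨z, hz1, hz2⟩
    · exact absurd h1 h2
    · exact h1
    · have a1 := h _ _ hz1
      have a2 := h _ _ hz2
      rcases h3 z (Or.inr (Or.inl hz1)) (Or.inr (Or.inl hz2)) with h' | h'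
      · subst h'; omega
      · subst h'; omega
  · intro hxy
    have a := h _ _ hxy
    refine ⟨Or.inr (Or.inl hxy), ?_, ?_⟩
    · rintro rfl; omega
    · intro z h1 h2
      rcases ofE_lt h h1 with h1 | h1
      · exact Or.inl h1.symm
      · rcases ofE_lt h h2 with h2 | h2
        · exact Or.inr h2
        · omega

theorem level_strict {r : V → V → Prop} (h : IsPartialOrder V r) {l : V → Fin 3}
    (hl : Lev (hasse r) 3 l) {x y : V} (hxy : r x y) : x = y ∨ (l x : ℕ) < l y := by
  rw [hasse_gen h] at hxy
  induction hxy with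
  | refl => exact Or.inl rfl
  | tail _ hbc ih =>
    have := hl _ _ hbc
    rcases ih with rfl | ih
    · right; omega
    · right; omega

end

theorem count_posets (good : ∀ N : ℕ, (Fin N → Fin N → Prop) → Prop)
    (hg : ∀ᶠ N in atTop, ∀ r : Fin N → Fin N → Prop, IsPartialOrder (Fin N) r →
      hasse r ∈ Goods N → good N r)
    (hpo : ∀ N r, good N r → IsPartialOrder (Fin N) r) :
    Tendsto (fun N : ℕ => (Nat.card {r : Fin N → Fin N → Prop // good N r} : ℝ) /
      (Nat.card {r : Fin N → Fin N → Prop // IsPartialOrder (Fin N) r} : ℝ)) atTop (𝓝 1) := by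
  have h0 := ratio_tendsto.const_sub 1
  rw [sub_zero] at h0
  refine tendsto_of_tendsto_of_tendsto_of_le_of_le' h0 tendsto_const_nhds ?_ ?_
  · filter_upwards [hg, goods_pos] with N h hG
    set A : Finset (Fin N → Fin N → Prop) := univ.filter (fun r => good N r) with hA
    set B : Finset (Fin N → Fin N → Prop) := univ.filter (fun r => IsPartialOrder (Fin N) r) with hB
    have e1 : Nat.card {r : Fin N → Fin N → Prop // good N r} = A.card := by
      rw [Nat.card_eq_fintype_card, Fintype.card_subtype]
    have e2 : Nat.card {r : Fin N → Fin N → Prop // IsPartialOrder (Fin N) r} = B.card := by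
      rw [Nat.card_eq_fintype_card, Fintype.card_subtype]
    rw [e1, e2]
    have hGB : (Goods N).card ≤ B.card := by
      refine card_le_card_of_injOn ofE ?_ ?_
      · intro E hE
        obtain ⟨l, hl⟩ := (mem_filter.1 hE).2
        simp only [hB, coe_filter, mem_univ, true_and, Set.mem_ofPred_eq]
        exact ofE_po hl.lev
      · intro E hE F hF hEF
        obtain ⟨l, hl⟩ := (mem_filter.1 hE).2
        obtain ⟨l', hl'⟩ := (mem_filter.1 hF).2
        rw [← hasse_ofE hl.lev, ← hasse_ofE hl'.lev, hEF]
    have hBA : (B \ A).card ≤ (Bads N).card := by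
      refine card_le_card_of_injOn hasse ?_ ?_
      · intro r hr
        have hr := mem_sdiff.1 hr
        simp only [hA, hB, mem_filter, mem_univ, true_and] at hr
        simp only [Bads, coe_filter, mem_univ, true_and, Set.mem_ofPred_eq]
        refine ⟨hasse_cls hr.1, fun hn => hr.2 (h r hr.1 ?_)⟩
        simp only [Goods, mem_filter, mem_univ, true_and]
        exact hn
      · intro r hr s hs hrs
        have hr := (mem_sdiff.1 hr).1
        have hs := (mem_sdiff.1 hs).1
        simp only [hB, mem_filter, mem_univ, true_and] at hr hs
        exact hasse_inj hr hs hrs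
    have hsum : B.card ≤ (B \ A).card + A.card := by
      rw [card_sdiff_add_card]
      exact card_le_card subset_union_left
    have hGB' : ((Goods N).card : ℝ) ≤ B.card := by exact_mod_cast hGB
    have hBA' : ((B \ A).card : ℝ) ≤ (Bads N).card := by exact_mod_cast hBA
    have hsum' : (B.card : ℝ) ≤ (B \ A).card + A.card := by exact_mod_cast hsum
    have hBpos : (0 : ℝ) < B.card := by linarith
    have : ((Bads N).card : ℝ) / B.card ≤ (Bads N).card / (Goods N).card := by gcongr
    have h2 : 1 - ((Bads N).card : ℝ) / B.card ≤ (A.card : ℝ) / B.card := by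
      rw [sub_le_iff_le_add, ← add_div, le_div_iff₀ hBpos]
      linarith
    linarith
  · refine Eventually.of_forall fun N => div_le_one_of_le₀ ?_ (by positivity)
    have : Nat.card {r : Fin N → Fin N → Prop // good N r} ≤
        Nat.card {r : Fin N → Fin N → Prop // IsPartialOrder (Fin N) r} :=
      Nat.card_le_card_of_injective (fun r => ⟨r.1, hpo N r.1 r.2⟩) (by
        intro a b hab
        simpa [Subtype.ext_iff] using hab)
    exact_mod_cast this

end KR

namespace KR
open Finset Filter Topology
open scoped Classical
set_option linter.unusedSectionVars false

section
variable {V : Type} [Fintype V]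

theorem kst {E : Finset (V × V)} {l : V → Fin 3} (h : Nice E l) {m : ℕ}
    (hm : 200 * m ≤ Fintype.card V) (hm' : 100 * (m * 40000 ^ m) < Fintype.card V) :
    ∃ S A T : Finset V, S.card = m ∧ A.card = m ∧ T.card = m ∧ (∀ a ∈ A, l a = 1) ∧
      (∀ s ∈ S, ∀ a ∈ A, (s, a) ∈ E) ∧ (∀ a ∈ A, ∀ t ∈ T, (a, t) ∈ E) := by
  by_contra hc
  set n := Fintype.card V with hn
  let I : V → Finset V := fun y => univ.filter (fun x => (x, y) ∈ E)
  let O : V → Finset V := fun y => univ.filter (fun x => (y, x) ∈ E)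
  let d := (n + 99) / 100
  have hI : ∀ y, l y = 1 → d ≤ (I y).card := by
    intro y hy
    have h1 := h.inn y hy
    have : (E.filter (fun e => e.2 = y)).card ≤ (I y).card := by
      refine card_le_card_of_injOn Prod.fst ?_ ?_
      · rintro ⟨a, b⟩ hab
        have hab := mem_filter.1 hab
        have h2 : b = y := hab.2
        subst h2
        simpa [I] using hab.1
      · rintro ⟨a, b⟩ hab ⟨a', b'⟩ hab' he
        have h1 : b = y := (mem_filter.1 hab).2
        have h2 : b' = y := (mem_filter.1 hab').2
        have h3 : a = a' := he
        rw [h1, h2, h3]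
    show (n + 99) / 100 ≤ _
    omega
  have hO : ∀ y, l y = 1 → d ≤ (O y).card := by
    intro y hy
    have h1 := h.out y hy
    have : (E.filter (fun e => e.1 = y)).card ≤ (O y).card := by
      refine card_le_card_of_injOn Prod.snd ?_ ?_
      · rintro ⟨a, b⟩ hab
        have hab := mem_filter.1 hab
        have h2 : a = y := hab.2
        subst h2
        simpa [O] using hab.1
      · rintro ⟨a, b⟩ hab ⟨a', b'⟩ hab' he
        have h1 : a = y := (mem_filter.1 hab).2
        have h2 : a' = y := (mem_filter.1 hab').2
        have h3 : b = b' := he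
        rw [h1, h2, h3]
    show (n + 99) / 100 ≤ _
    omega
  let R : V → (Finset V × Finset V) → Prop := fun y p => p.1 ⊆ I y ∧ p.2 ⊆ O y
  have dc := sum_card_bipartiteAbove_eq_sum_card_bipartiteBelow (s := LL l 1)
    (t := powersetCard m (univ : Finset V) ×ˢ powersetCard m (univ : Finset V)) R
  have lo : (LL l 1).card * (d.choose m * d.choose m) ≤
      ∑ a ∈ LL l 1, (bipartiteAbove R
        (powersetCard m (univ : Finset V) ×ˢ powersetCard m (univ : Finset V)) a).card := by
    rw [← smul_eq_mul]
    refine card_nsmul_le_sum _ _ _ fun y hy => ?_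
    have hy := mem_LL.1 hy
    have e : bipartiteAbove R
        (powersetCard m (univ : Finset V) ×ˢ powersetCard m (univ : Finset V)) y =
        powersetCard m (I y) ×ˢ powersetCard m (O y) := by
      ext ⟨S, T⟩
      simp only [bipartiteAbove, R, mem_filter, mem_product, mem_powersetCard, subset_univ,
        true_and]
      tauto
    rw [e, card_product, card_powersetCard, card_powersetCard]
    exact Nat.mul_le_mul (Nat.choose_le_choose _ (hI y hy)) (Nat.choose_le_choose _ (hO y hy))
  have up : ∑ p ∈ powersetCard m (univ : Finset V) ×ˢ powersetCard m (univ : Finset V),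
      (bipartiteBelow R (LL l 1) p).card ≤ (n.choose m * n.choose m) * m := by
    have : (powersetCard m (univ : Finset V) ×ˢ powersetCard m (univ : Finset V)).card =
        n.choose m * n.choose m := by
      rw [card_product, card_powersetCard, card_univ]
    rw [← this, ← smul_eq_mul]
    refine sum_le_card_nsmul _ _ _ fun p hp => ?_
    by_contra hlt
    push Not at hlt
    obtain ⟨A, hA, hAc⟩ := exists_subset_card_eq hlt.le
    rw [mem_product, mem_powersetCard, mem_powersetCard] at hp
    refine hc ⟨p.1, A, p.2, hp.1.2, hAc, hp.2.2, ?_, ?_, ?_⟩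
    · intro a ha
      exact mem_LL.1 (mem_filter.1 (hA ha)).1
    · intro s hs a ha
      have := (mem_filter.1 (hA ha)).2.1 hs
      simpa [I] using this
    · intro a ha t ht
      have := (mem_filter.1 (hA ha)).2.2 ht
      simpa [O] using this
  rw [dc] at lo
  have hfin := lo.trans up
  have hd : n ≤ 200 * (d + 1 - m) := by
    have : d = (n + 99) / 100 := rfl
    omega
  have hmd : m ≤ d := by
    have : d = (n + 99) / 100 := rfl
    omega
  have hch : n.choose m ≤ 200 ^ m * d.choose m := by
    have h1 : m.factorial * n.choose m ≤ m.factorial * (200 ^ m * d.choose m) := by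
      rw [← Nat.descFactorial_eq_factorial_mul_choose]
      calc n.descFactorial m ≤ n ^ m := Nat.descFactorial_le_pow _ _
        _ ≤ (200 * (d + 1 - m)) ^ m := Nat.pow_le_pow_left hd _
        _ = 200 ^ m * (d + 1 - m) ^ m := mul_pow _ _ _
        _ ≤ 200 ^ m * d.descFactorial m := Nat.mul_le_mul_left _ (Nat.pow_sub_le_descFactorial _ _)
        _ = _ := by rw [Nat.descFactorial_eq_factorial_mul_choose]; ring
    exact Nat.le_of_mul_le_mul_left h1 (Nat.factorial_pos m)
  have hpos : 0 < d.choose m := Nat.choose_pos hmd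
  have h1 : (LL l 1).card * (d.choose m * d.choose m) ≤
      (m * 40000 ^ m) * (d.choose m * d.choose m) := by
    refine hfin.trans ?_
    calc _ ≤ ((200 ^ m * d.choose m) * (200 ^ m * d.choose m)) * m := by gcongr
      _ = _ := by
        rw [show (40000 : ℕ) = 200 * 200 by norm_num, mul_pow]; ring
  have h2 := Nat.le_of_mul_le_mul_right h1 (Nat.mul_pos hpos hpos)
  have h3 := h.mid
  omega

end

section entropy
variable {V : Type} [Fintype V] [PartialOrder V]

theorem mem_antichains {A : Finset V} : A ∈ antichains V ↔ IsAntichain (· ≤ ·) (A : Set V) := by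
  simp [antichains]

theorem mem_antichainsIn {Q : Set V} {A : Finset V} :
    A ∈ antichainsIn Q ↔ IsAntichain (· ≤ ·) (A : Set V) ∧ (A : Set V) ⊆ Q := by
  simp [antichainsIn, antichains]

/-- The shadow as a finset. -/
noncomputable def sh (Q : Set V) (A : Finset V) : Finset V := (upperShadow Q (A : Set V)).toFinset

theorem sh_mem (Q : Set V) (A : Finset V) : sh Q A ∈ antichainsIn Q := by
  rw [mem_antichainsIn]
  simp only [sh, Set.coe_toFinset]
  constructor
  · intro x hx y hy hne hxy
    obtain ⟨s, hs, hsx⟩ := hx.2.1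
    exact hy.2.2 x hx.1 (lt_of_le_of_ne hxy hne) s hs hsx
  · intro x hx; exact hx.1

theorem shadowWeight_eq (α : Finset V → ℝ) (Q : Set V) (T : Finset V) :
    shadowWeight α Q T = ∑ A ∈ (antichains V).filter (fun A => sh Q A = T), α A := by
  unfold shadowWeight
  refine sum_congr ?_ fun _ _ => rfl
  ext A
  rw [mem_filter, mem_filter]
  refine and_congr_right fun _ => ?_
  unfold sh
  constructor
  · intro h
    ext x
    simp [h]
  · rintro rfl
    simp

theorem sum_fiber (α : Finset V → ℝ) (Q : Set V) :
    ∑ T ∈ antichainsIn Q, ∑ A ∈ (antichains V).filter (fun A => sh Q A = T), α A =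
      ∑ A ∈ antichains V, α A :=
  sum_fiberwise_of_maps_to (fun A _ => sh_mem Q A) α

theorem critExp_eq (α : Finset V → ℝ) (Q : Set V) : critExp α Q =
    (∑ T ∈ antichainsIn Q, Real.negMulLog (shadowWeight α Q T)) / Q.ncard := by
  unfold critExp
  congr 1
  refine sum_congr rfl fun T _ => ?_
  rw [Real.negMulLog]; ring

theorem critExp_le {α : Finset V → ℝ} (hα : IsWeighting α) (Q : Set V) :
    critExp α Q ≤ Real.log (antichainsIn Q).card / Q.ncard := by
  rw [critExp_eq]
  have hM : 0 < (antichainsIn Q).card := card_pos.2 ⟨_, sh_mem Q ∅⟩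
  have hM' : (0 : ℝ) < (antichainsIn Q).card := by exact_mod_cast hM
  refine div_le_div_of_nonneg_right ?_ (by positivity)
  have hs : ∑ T ∈ antichainsIn Q, shadowWeight α Q T = 1 := by
    simp only [shadowWeight_eq]
    rw [sum_fiber]; exact hα.2.2
  have hnn : ∀ T ∈ antichainsIn Q, shadowWeight α Q T ∈ Set.Ici (0 : ℝ) := by
    intro T _
    exact sum_nonneg fun A hA => hα.1 A (mem_filter.1 hA).1
  have hJ := Real.concaveOn_negMulLog.le_map_sum (t := antichainsIn Q)
    (w := fun _ => 1 / ((antichainsIn Q).card : ℝ)) (p := fun T => shadowWeight α Q T)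
    (fun _ _ => by positivity) (by rw [sum_const, nsmul_eq_mul]; field_simp) hnn
  simp only [smul_eq_mul] at hJ
  rw [← mul_sum, ← mul_sum, hs, mul_one, Real.negMulLog, one_div, Real.log_inv] at hJ
  rw [neg_mul_neg] at hJ
  exact le_of_mul_le_mul_left hJ (inv_pos.2 hM')

variable (l : V → Fin 3)

noncomputable def wt (i : Fin 3) (A : Finset V) : ℝ :=
  if A ⊆ LL l i then (1 / 2) ^ (LL l i).card else 0

noncomputable def aa (A : Finset V) : ℝ := ∑ i : Fin 3, (1 / 3 : ℝ) * wt l i A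

theorem wt_nonneg (i : Fin 3) (A : Finset V) : 0 ≤ wt l i A := by
  unfold wt; split_ifs <;> positivity

variable {l}

theorem level_antichain (hl : ∀ x y : V, x < y → (l x : ℕ) < l y) {i : Fin 3} {A : Finset V}
    (hA : A ⊆ LL l i) : A ∈ antichains V := by
  rw [mem_antichains]
  intro x hx y hy hne hxy
  have h1 := mem_LL.1 (hA hx)
  have h2 := mem_LL.1 (hA hy)
  have := hl x y (lt_of_le_of_ne hxy hne)
  rw [h1, h2] at this
  omega

theorem sum_wt (hl : ∀ x y : V, x < y → (l x : ℕ) < l y) (i : Fin 3) :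
    ∑ A ∈ antichains V, wt l i A = 1 := by
  unfold wt
  rw [← sum_filter]
  have : (antichains V).filter (fun A => A ⊆ LL l i) = (LL l i).powerset := by
    ext A
    simp only [mem_filter, mem_powerset]
    exact ⟨fun h => h.2, fun h => ⟨level_antichain hl h, h⟩⟩
  rw [this, sum_const, card_powerset, nsmul_eq_mul]
  push_cast
  rw [← mul_pow]
  norm_num

theorem aa_weighting (hl : ∀ x y : V, x < y → (l x : ℕ) < l y) : IsWeighting (aa l) := by
  refine ⟨fun A _ => ?_, fun A hA => ?_, ?_⟩
  · exact sum_nonneg fun i _ => mul_nonneg (by norm_num) (wt_nonneg l i A)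
  · refine sum_eq_zero fun i _ => ?_
    rw [wt, if_neg (fun h => hA (level_antichain hl h)), mul_zero]
  · unfold aa
    rw [sum_comm]
    simp only [← mul_sum, sum_wt hl]
    simp

theorem sh_inter (hl : ∀ x y : V, x < y → (l x : ℕ) < l y) {i : Fin 3} {A : Finset V}
    (hA : A ⊆ LL l i) (Q : Set V) (x : V) (hx : x ∈ LL l i) (hxQ : x ∈ Q) :
    x ∈ A ↔ x ∈ sh Q A := by
  have eq_of_le : ∀ s ∈ A, s ≤ x → s = x := by
    intro s hs hsx
    by_contra hne
    have := hl s x (lt_of_le_of_ne hsx hne)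
    rw [mem_LL.1 (hA hs), mem_LL.1 hx] at this
    omega
  simp only [sh, Set.mem_toFinset]
  constructor
  · intro hxA
    refine ⟨hxQ, ⟨x, hxA, le_rfl⟩, ?_⟩
    intro z _ hzx s hs hsz
    have := eq_of_le s hs (hsz.trans hzx.le)
    subst this
    exact absurd hsz hzx.not_ge
  · rintro ⟨_, ⟨s, hs, hsx⟩, _⟩
    rw [← eq_of_le s hs hsx]
    exact hs

theorem fiber_le (hl : ∀ x y : V, x < y → (l x : ℕ) < l y) (i : Fin 3) (Q : Set V) (T : Finset V) :
    ∑ A ∈ (antichains V).filter (fun A => sh Q A = T), wt l i A ≤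
      (1 / 2) ^ ((LL l i).filter (fun x => x ∈ Q)).card := by
  unfold wt
  rw [← sum_filter, sum_const, nsmul_eq_mul]
  have hc : (((antichains V).filter (fun A => sh Q A = T)).filter (fun A => A ⊆ LL l i)).card ≤
      2 ^ ((LL l i).filter (fun x => x ∉ Q)).card := by
    rw [← card_powerset]
    refine card_le_card_of_injOn (fun A => A.filter (fun x => x ∉ Q)) ?_ ?_
    · intro A hA
      have hA := (mem_filter.1 hA).2
      simp only [mem_coe, mem_powerset]
      exact filter_subset_filter _ hA
    · intro A hA B hB hAB
      have hAT := (mem_filter.1 (mem_filter.1 hA).1).2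
      have hBT := (mem_filter.1 (mem_filter.1 hB).1).2
      have hA := (mem_filter.1 hA).2
      have hB := (mem_filter.1 hB).2
      have hAB : A.filter (fun x => x ∉ Q) = B.filter (fun x => x ∉ Q) := hAB
      ext x
      by_cases hxQ : x ∈ Q
      · by_cases hx : x ∈ LL l i
        · rw [sh_inter hl hA Q x hx hxQ, sh_inter hl hB Q x hx hxQ, hAT, hBT]
        · exact ⟨fun h => absurd (hA h) hx, fun h => absurd (hB h) hx⟩
      · have := Finset.ext_iff.1 hAB x
        simpa [hxQ] using this
  have hsum := card_filter_add_card_filter_not (s := LL l i) (fun x => x ∈ Q)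
  have hc' : ((((antichains V).filter (fun A => sh Q A = T)).filter
      (fun A => A ⊆ LL l i)).card : ℝ) ≤ 2 ^ ((LL l i).filter (fun x => x ∉ Q)).card := by
    exact_mod_cast hc
  calc _ ≤ (2 : ℝ) ^ ((LL l i).filter (fun x => x ∉ Q)).card * (1 / 2) ^ (LL l i).card := by
        gcongr
    _ = _ := by
      rw [← hsum, pow_add, mul_comm ((1 / 2 : ℝ) ^ _), ← mul_assoc, ← mul_pow]
      norm_num

theorem critExp_ge (hl : ∀ x y : V, x < y → (l x : ℕ) < l y) (Q : Set V) (hQ : Q.Nonempty) :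
    Real.log 2 / 3 ≤ critExp (aa l) Q := by
  rw [critExp_eq]
  have hQ0 : 0 < Q.ncard := (Set.ncard_pos).2 hQ
  rw [le_div_iff₀ (by exact_mod_cast hQ0)]
  let p : Fin 3 → Finset V → ℝ := fun i T =>
    ∑ A ∈ (antichains V).filter (fun A => sh Q A = T), wt l i A
  have hp0 : ∀ i T, 0 ≤ p i T := fun i T => sum_nonneg fun A _ => wt_nonneg l i A
  have hp1 : ∀ i T, p i T ≤ (1 / 2) ^ ((LL l i).filter (fun x => x ∈ Q)).card :=
    fun i T => fiber_le hl i Q T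
  have hsw : ∀ T, shadowWeight (aa l) Q T = ∑ i : Fin 3, (1 / 3 : ℝ) * p i T := by
    intro T
    rw [shadowWeight_eq]
    unfold aa
    rw [sum_comm]
    simp only [p, mul_sum]
  have h1 : ∀ T, ∑ i : Fin 3, (1 / 3 : ℝ) *
      (p i T * (((LL l i).filter (fun x => x ∈ Q)).card * Real.log 2)) ≤
      Real.negMulLog (shadowWeight (aa l) Q T) := by
    intro T
    rw [hsw]
    have hJ := Real.concaveOn_negMulLog.le_map_sum (t := (univ : Finset (Fin 3)))
      (w := fun _ => (1 / 3 : ℝ)) (p := fun i => p i T)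
      (fun _ _ => by norm_num) (by simp) (fun i _ => hp0 i T)
    simp only [smul_eq_mul] at hJ
    refine le_trans (sum_le_sum fun i _ => ?_) hJ
    refine mul_le_mul_of_nonneg_left ?_ (by norm_num)
    rw [Real.negMulLog, neg_mul, ← mul_neg]
    rcases (hp0 i T).eq_or_lt with h0 | h0
    · rw [← h0, zero_mul, zero_mul]
    · refine mul_le_mul_of_nonneg_left ?_ (hp0 i T)
      have := Real.log_le_log h0 (hp1 i T)
      rw [Real.log_pow, one_div, Real.log_inv] at this
      linarith
  calc Real.log 2 / 3 * Q.ncard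
      = ∑ i : Fin 3, (1 / 3 : ℝ) * (1 * (((LL l i).filter (fun x => x ∈ Q)).card * Real.log 2)) := by
        have : (Q.ncard : ℝ) = ∑ i : Fin 3, (((LL l i).filter (fun x => x ∈ Q)).card : ℝ) := by
          rw [Set.ncard_eq_toFinset_card']
          rw [card_eq_sum_card_fiberwise (f := l) (t := univ) (fun _ _ => by simp)]
          push_cast
          refine sum_congr rfl fun i _ => ?_
          congr 2
          ext x
          simp [LL, and_comm]
        rw [this, mul_sum]
        refine sum_congr rfl fun i _ => by ring
    _ = ∑ T ∈ antichainsIn Q, ∑ i : Fin 3, (1 / 3 : ℝ) *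
      (p i T * (((LL l i).filter (fun x => x ∈ Q)).card * Real.log 2)) := by
        rw [sum_comm]
        refine sum_congr rfl fun i _ => ?_
        rw [← mul_sum, ← sum_mul]
        congr 2
        rw [← sum_wt hl i]
        exact (sum_fiber _ Q).symm
    _ ≤ _ := sum_le_sum fun T _ => h1 T

end entropy

end KR

namespace KR
open Finset Filter Topology
open scoped Classical
set_option linter.unusedSectionVars false

section
variable {V : Type} [Fintype V] [PartialOrder V]

theorem crit_bdd [Nonempty V] : BddAbove {c : ℝ | 0 ≤ c ∧ ∃ α : Finset V → ℝ, IsWeighting α ∧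
    ∀ Q : Set V, Q.Nonempty → c ≤ critExp α Q} := by
  refine ⟨Real.log (antichainsIn (Set.univ : Set V)).card / (Set.univ : Set V).ncard, ?_⟩
  rintro c ⟨_, α, hα, h⟩
  exact (h Set.univ Set.univ_nonempty).trans (critExp_le hα _)

theorem crit_mem {l : V → Fin 3} (hl : ∀ x y : V, x < y → (l x : ℕ) < l y) :
    Real.log 2 / 3 ∈ {c : ℝ | 0 ≤ c ∧ ∃ α : Finset V → ℝ, IsWeighting α ∧
    ∀ Q : Set V, Q.Nonempty → c ≤ critExp α Q} :=
  ⟨by have := Real.log_nonneg (x := 2) (by norm_num); linarith, aa l, aa_weighting hl,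
    fun Q hQ => critExp_ge hl Q hQ⟩

theorem crit_lower [Nonempty V] {l : V → Fin 3} (hl : ∀ x y : V, x < y → (l x : ℕ) < l y) :
    Real.log 2 / 3 ≤ critStar V := le_csSup crit_bdd (crit_mem hl)

theorem crit_upper {l : V → Fin 3} (hl : ∀ x y : V, x < y → (l x : ℕ) < l y) (Q : Set V)
    (hQ : Q.Nonempty) : critStar V ≤ Real.log (antichainsIn Q).card / Q.ncard := by
  refine csSup_le ⟨_, crit_mem hl⟩ ?_
  rintro c ⟨_, α, hα, h⟩
  exact (h Q hQ).trans (critExp_le hα _)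

theorem crit_upper' {l : V → Fin 3} (hl : ∀ x y : V, x < y → (l x : ℕ) < l y) {m : ℕ} (hm : 0 < m)
    {S A T : Finset V} (hS : S.card = m) (hA : A.card = m) (hT : T.card = m)
    (h1 : ∀ s ∈ S, ∀ a ∈ A, s < a) (h2 : ∀ a ∈ A, ∀ t ∈ T, a < t) :
    critStar V ≤ Real.log 2 / 3 + Real.log 3 / (3 * m) := by
  have hAne : A.Nonempty := card_pos.1 (by omega)
  obtain ⟨a0, ha0⟩ := hAne
  have h3 : ∀ s ∈ S, ∀ t ∈ T, s < t := fun s hs t ht => (h1 s hs a0 ha0).trans (h2 a0 ha0 t ht)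
  have dSA : Disjoint S A := disjoint_left.2 fun x hx hx' => lt_irrefl _ (h1 x hx x hx')
  have dAT : Disjoint A T := disjoint_left.2 fun x hx hx' => lt_irrefl _ (h2 x hx x hx')
  have dST : Disjoint S T := disjoint_left.2 fun x hx hx' => lt_irrefl _ (h3 x hx x hx')
  set Q : Finset V := S ∪ A ∪ T with hQ
  have hQc : Q.card = 3 * m := by
    rw [hQ, card_union_of_disjoint (disjoint_union_left.2 ⟨dST, dAT⟩), card_union_of_disjoint dSA]
    omega
  have hsub : antichainsIn (Q : Set V) ⊆ S.powerset ∪ A.powerset ∪ T.powerset := by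
    intro B hB
    rw [mem_antichainsIn] at hB
    obtain ⟨hB, hBQ⟩ := hB
    have inc : ∀ x ∈ B, ∀ y ∈ B, ¬ x < y := by
      intro x hx y hy hxy
      exact hB hx hy hxy.ne hxy.le
    have hBQ : ∀ x ∈ B, x ∈ S ∨ x ∈ A ∨ x ∈ T := by
      intro x hx
      have := hBQ hx
      simpa [hQ, or_assoc] using this
    simp only [mem_union, mem_powerset]
    by_cases e1 : ∃ x ∈ B, x ∈ S
    · obtain ⟨x, hx, hxS⟩ := e1
      left; left
      intro y hy
      rcases hBQ y hy with h | h | h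
      · exact h
      · exact absurd (h1 x hxS y h) (inc x hx y hy)
      · exact absurd (h3 x hxS y h) (inc x hx y hy)
    · push Not at e1
      by_cases e2 : ∃ x ∈ B, x ∈ A
      · obtain ⟨x, hx, hxA⟩ := e2
        left; right
        intro y hy
        rcases hBQ y hy with h | h | h
        · exact absurd h (e1 y hy)
        · exact h
        · exact absurd (h2 x hxA y h) (inc x hx y hy)
      · push Not at e2
        right
        intro y hy
        rcases hBQ y hy with h | h | h
        · exact absurd h (e1 y hy)
        · exact absurd h (e2 y hy)
        · exact h
  have hcard : (antichainsIn (Q : Set V)).card ≤ 3 * 2 ^ m := by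
    refine (card_le_card hsub).trans ((card_union_le _ _).trans
      ((Nat.add_le_add_right (card_union_le _ _) _).trans ?_))
    rw [card_powerset, card_powerset, card_powerset, hS, hA, hT]
    omega
  have hpos : 0 < (antichainsIn (Q : Set V)).card := card_pos.2 ⟨_, sh_mem _ ∅⟩
  have hu := crit_upper hl (Q : Set V) ⟨a0, by simp [hQ, ha0]⟩
  rw [Set.ncard_coe_finset, hQc] at hu
  refine hu.trans ?_
  have hm' : (0 : ℝ) < m := by exact_mod_cast hm
  have hlog : Real.log (antichainsIn (Q : Set V)).card ≤ Real.log 3 + m * Real.log 2 := by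
    have : ((antichainsIn (Q : Set V)).card : ℝ) ≤ 3 * 2 ^ m := by exact_mod_cast hcard
    refine (Real.log_le_log (by exact_mod_cast hpos) this).trans (le_of_eq ?_)
    rw [Real.log_mul (by norm_num) (by positivity), Real.log_pow]
  push_cast
  rw [div_le_iff₀ (by positivity)]
  refine hlog.trans (le_of_eq ?_)
  field_simp
  ring

end

theorem asym : ∀ᶠ n : ℕ in atTop, ∃ m : ℕ, 0 < m ∧ 200 * m ≤ n ∧ 100 * (m * 40000 ^ m) < n ∧
    Real.log 3 / (3 * m) ≤ 20 / Real.log n := by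
  have ht : Tendsto (fun n : ℕ => Real.log n) atTop atTop :=
    Real.tendsto_log_atTop.comp tendsto_natCast_atTop_atTop
  filter_upwards [ht.eventually_ge_atTop 400, eventually_ge_atTop 1] with n hL hn
  have hn0 : (0 : ℝ) < n := by exact_mod_cast hn
  set L := Real.log n with hLdef
  set m := ⌊L / 20⌋₊ with hm
  have m1 : (m : ℝ) ≤ L / 20 := Nat.floor_le (by linarith)
  have m2 : L / 20 < m + 1 := Nat.lt_floor_add_one _
  have m3 : L / 40 ≤ m := by linarith
  have m4 : (0 : ℝ) < m := by linarith
  have m5 : 0 < m := by exact_mod_cast m4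
  have e1 : (40000 : ℝ) ≤ Real.exp 11 := by
    have h1 : (2.7 : ℝ) ≤ Real.exp 1 := by linarith [Real.exp_one_gt_d9]
    calc (40000 : ℝ) ≤ 2.7 ^ 11 := by norm_num
      _ ≤ Real.exp 1 ^ 11 := by gcongr
      _ = Real.exp 11 := by rw [← Real.exp_nat_mul]; norm_num
  have e2 : (m : ℝ) ≤ Real.exp m := by linarith [Real.add_one_le_exp (m : ℝ)]
  have e3 : (m : ℝ) * 40000 ^ m ≤ Real.exp (12 * m) := by
    calc (m : ℝ) * 40000 ^ m ≤ Real.exp m * Real.exp 11 ^ m := by gcongr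
      _ = Real.exp (12 * m) := by
        rw [← Real.exp_nat_mul, ← Real.exp_add]; congr 1; ring
  have e4 : 100 < Real.exp (2 / 5 * L) := by linarith [Real.add_one_le_exp (2 / 5 * L)]
  have e5 : (100 : ℝ) * (m * 40000 ^ m) < n := by
    calc (100 : ℝ) * (m * 40000 ^ m) ≤ 100 * Real.exp (12 * m) := by gcongr
      _ ≤ 100 * Real.exp (3 / 5 * L) :=
        mul_le_mul_of_nonneg_left (Real.exp_le_exp.2 (by linarith)) (by norm_num)
      _ < Real.exp (2 / 5 * L) * Real.exp (3 / 5 * L) := by gcongr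
      _ = Real.exp L := by rw [← Real.exp_add]; congr 1; ring
      _ = n := Real.exp_log hn0
  have e6 : 100 * (m * 40000 ^ m) < n := by exact_mod_cast e5
  refine ⟨m, m5, ?_, e6, ?_⟩
  · have : 2 ≤ 40000 ^ m := by
      calc 2 ≤ 40000 ^ 1 := by norm_num
        _ ≤ 40000 ^ m := Nat.pow_le_pow_right (by norm_num) m5
    nlinarith [Nat.mul_le_mul_left m this]
  · have l3 : Real.log 3 ≤ 3 / 2 := by
      rw [Real.log_le_iff_le_exp (by norm_num)]
      have h1 : (2.7 : ℝ) ≤ Real.exp 1 := by linarith [Real.exp_one_gt_d9]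
      have h2 : (1.5 : ℝ) ≤ Real.exp (1 / 2) := by
        linarith [Real.add_one_le_exp (1 / 2 : ℝ)]
      calc (3 : ℝ) ≤ 2.7 * 1.5 := by norm_num
        _ ≤ Real.exp 1 * Real.exp (1 / 2) := by gcongr
        _ = Real.exp (3 / 2) := by rw [← Real.exp_add]; norm_num
    rw [div_le_div_iff₀ (by positivity) (by linarith)]
    nlinarith

theorem crit_main : ∀ᶠ N : ℕ in atTop, ∀ r : Fin N → Fin N → Prop, IsPartialOrder (Fin N) r →
    hasse r ∈ Goods N → ∃ h : IsPartialOrder (Fin N) r,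
      Real.log 2 / 3 ≤ @critStar (Fin N) _ (relPO r h) ∧
        @critStar (Fin N) _ (relPO r h) ≤ Real.log 2 / 3 + 20 / Real.log N := by
  filter_upwards [asym, eventually_ge_atTop 1] with N hN hN1 r h hG
  refine ⟨h, ?_⟩
  obtain ⟨m, hm, hm1, hm2, hm3⟩ := hN
  obtain ⟨l, hl⟩ := (mem_filter.1 hG).2
  letI : PartialOrder (Fin N) := relPO r h
  haveI : Nonempty (Fin N) := ⟨⟨0, hN1⟩⟩
  have hlt : ∀ x y : Fin N, (relPO r h).lt x y → (l x : ℕ) < l y := by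
    intro x y hxy
    have hle : r x y := (@le_of_lt _ (relPO r h).toPreorder x y hxy)
    have hne : x ≠ y := @ne_of_lt _ (relPO r h).toPreorder x y hxy
    rcases level_strict h hl.lev hle with h' | h'
    · exact absurd h' hne
    · exact h'
  have hcov : ∀ x y, (x, y) ∈ hasse r → (relPO r h).lt x y := by
    intro x y hxy
    have := mem_hasse.1 hxy
    exact @lt_of_le_of_ne _ (relPO r h) x y this.1 this.2.1
  obtain ⟨S, A, T, hS, hA, hT, _, h1, h2⟩ := kst hl (m := m) (by rwa [Fintype.card_fin])
    (by rwa [Fintype.card_fin])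
  refine ⟨@crit_lower (Fin N) _ (relPO r h) _ l hlt, ?_⟩
  refine (@crit_upper' (Fin N) _ (relPO r h) l hlt m hm S A T hS hA hT
    (fun s hs a ha => hcov _ _ (h1 s hs a ha)) (fun a ha t ht => hcov _ _ (h2 a ha t ht))).trans ?_
  linarith

end KR

/-- Almost all posets on `N` labelled elements satisfy
`log 2 / 3 ≤ c_⋆(P) ≤ log 2 / 3 + K / log N`: there is a constant `K > 0` such that the
proportion of partial orders on `[N]` (modelled as `Fin N`) satisfying these bounds tends
to `1` as `N → ∞`. -/
theorem stmt17 :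
    ∃ K : ℝ, 0 < K ∧
      Filter.Tendsto (fun N : ℕ =>
          (Nat.card {r : Fin N → Fin N → Prop // ∃ h : IsPartialOrder (Fin N) r,
              Real.log 2 / 3 ≤ @critStar (Fin N) _ (relPO r h) ∧
                @critStar (Fin N) _ (relPO r h) ≤ Real.log 2 / 3 + K / Real.log N} : ℝ) /
            (Nat.card {r : Fin N → Fin N → Prop // IsPartialOrder (Fin N) r} : ℝ))
        Filter.atTop (nhds 1) := by
  refine ⟨20, by norm_num, ?_⟩
  exact KR.count_posets (fun N r => ∃ h : IsPartialOrder (Fin N) r,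
              Real.log 2 / 3 ≤ @critStar (Fin N) _ (relPO r h) ∧
                @critStar (Fin N) _ (relPO r h) ≤ Real.log 2 / 3 + 20 / Real.log N)
    KR.crit_main (fun N r h => h.1)
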